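/- arXiv:2007.02740 — 4 statements merged into one kernel-verified Lean document; each statement's English description precedes it below -/
import Mathlib

section
/- There exists a universal constant κ > 0 such that the following holds. Let g : {0,1}^n → {0,1} be a non-constant monotone function, φ a CNF contradiction over ℓ variables, eq the equality function on t-bit strings with t ≥ 2·log₂ ℓ, and suppose S_φ ◇ eq reduces to mKW_g via an injective reduction with input maps R_A : Λ^ℓ → g^{-1}(1) and R_B : Λ^ℓ → g^{-1}(0), where Λ = {0,1}^t. Let 𝒳 = R_A(Λ^ℓ), 𝒴 = R_B(Λ^ℓ), and K = |Λ^ℓ| = 2^{t·ℓ}. Then there exists a matrix A ∈ F₂^{𝒳×𝒴} (with rows indexed by 𝒳 and columns by 𝒴 via the bijections R_A, R_B with Λ^ℓ) that is symmetric, satisfies A² = I_K, and satisfies log₂ μ_{F₂}(mKW_{𝒳×𝒴}, A) ≥ κ·NS_{F₂}(φ)·t. -/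
open Classical

noncomputable section

/-! ### Deterministic communication protocols -/

/-- A deterministic communication protocol: a finite binary protocol tree whose
leaves are labeled by outputs in `O`.  At a `nodeA` vertex Alice sends a bit
(computed from her input), at a `nodeB` vertex Bob sends a bit. -/
inductive Protocol (X Y O : Type) : Type where
  | leaf : O → Protocol X Y O
  | nodeA : (X → Bool) → Protocol X Y O → Protocol X Y O → Protocol X Y O
  | nodeB : (Y → Bool) → Protocol X Y O → Protocol X Y O → Protocol X Y O

namespace Protocol

variable {X Y O : Type}

/-- The output of the protocol on an input pair. -/
def run : Protocol X Y O → X → Y → O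
  | leaf o, _, _ => o
  | nodeA h p0 p1, x, y => if h x then run p1 x y else run p0 x y
  | nodeB h p0 p1, x, y => if h y then run p1 x y else run p0 x y

/-- Depth (communication complexity) of a protocol tree. -/
def depth : Protocol X Y O → ℕ
  | leaf _ => 0
  | nodeA _ p0 p1 => max (depth p0) (depth p1) + 1
  | nodeB _ p0 p1 => max (depth p0) (depth p1) + 1

/-- Number of leaves (protocol size). -/
def leaves : Protocol X Y O → ℕ
  | leaf _ => 1
  | nodeA _ p0 p1 => leaves p0 + leaves p1
  | nodeB _ p0 p1 => leaves p0 + leaves p1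

/-- `followsA p π x` : Alice's input `x` is consistent with the partial transcript `π`,
i.e. `x` belongs to the Alice-side `𝒳_π` of the rectangle associated with the vertex `π`. -/
def followsA : Protocol X Y O → List Bool → X → Prop
  | _, [], _ => True
  | leaf _, _ :: _, _ => False
  | nodeA h p0 p1, b :: rest, x =>
      h x = b ∧ (if b then followsA p1 rest x else followsA p0 rest x)
  | nodeB _ p0 p1, b :: rest, x =>
      if b then followsA p1 rest x else followsA p0 rest x

/-- `followsB p π y` : Bob's input `y` is consistent with the partial transcript `π`,
i.e. `y` belongs to the Bob-side `𝒴_π` of the rectangle associated with the vertex `π`. -/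
def followsB : Protocol X Y O → List Bool → Y → Prop
  | _, [], _ => True
  | leaf _, _ :: _, _ => False
  | nodeA _ p0 p1, b :: rest, y =>
      if b then followsB p1 rest y else followsB p0 rest y
  | nodeB h p0 p1, b :: rest, y =>
      h y = b ∧ (if b then followsB p1 rest y else followsB p0 rest y)

/-- The subtree of the protocol reached by following a partial transcript. -/
def subtree : Protocol X Y O → List Bool → Option (Protocol X Y O)
  | p, [] => some p
  | leaf _, _ :: _ => none
  | nodeA _ p0 p1, b :: rest => if b then subtree p1 rest else subtree p0 rest
  | nodeB _ p0 p1, b :: rest => if b then subtree p1 rest else subtree p0 rest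

/-- `π` is a (partial or full) transcript of the protocol, i.e. a vertex of the protocol tree. -/
def IsTranscript (p : Protocol X Y O) (π : List Bool) : Prop :=
  (subtree p π).isSome = true

/-- `π` is a full transcript of the protocol, i.e. a root-to-leaf path. -/
def IsFullTranscript (p : Protocol X Y O) (π : List Bool) : Prop :=
  ∃ o : O, subtree p π = some (leaf o)

end Protocol

/-- A protocol solves a communication problem `S` if on every input pair it
outputs a valid output. -/
def Solves {X Y O : Type} (p : Protocol X Y O) (S : X → Y → O → Prop) : Prop :=
  ∀ x y, S x y (p.run x y)

/-- `L(S)`: minimal number of leaves of a protocol solving `S`. -/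
def Lsize {X Y O : Type} (S : X → Y → O → Prop) : ℕ :=
  sInf {k | ∃ p : Protocol X Y O, Solves p S ∧ p.leaves = k}

/-- `CC(S)`: the deterministic communication complexity (minimal depth) of `S`. -/
def CC {X Y O : Type} (S : X → Y → O → Prop) : ℕ :=
  sInf {k | ∃ p : Protocol X Y O, Solves p S ∧ p.depth = k}

/-! ### Decision trees and query complexity -/

inductive DTree (ι O : Type) : Type where
  | leaf : O → DTree ι O
  | node : ι → DTree ι O → DTree ι O → DTree ι O

namespace DTree

variable {ι O : Type}

def run : DTree ι O → (ι → Bool) → O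
  | leaf o, _ => o
  | node i t0 t1, z => if z i then run t1 z else run t0 z

def depth : DTree ι O → ℕ
  | leaf _ => 0
  | node _ t0 t1 => max (depth t0) (depth t1) + 1

end DTree

def DSolves {ι O : Type} (T : DTree ι O) (S : (ι → Bool) → O → Prop) : Prop :=
  ∀ z, S z (T.run z)

/-- `Q(S)`: the deterministic query complexity of the search problem `S`. -/
def Qcomplexity {ι O : Type} (S : (ι → Bool) → O → Prop) : ℕ :=
  sInf {k | ∃ T : DTree ι O, DSolves T S ∧ T.depth = k}

/-! ### Monotone Karchmer–Wigderson relations -/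

/-- The monotone KW relation of a rectangle `A × B`: find `i` with `x i > y i`. -/
def mKWrect {ι : Type} (A B : Set (ι → Bool)) : ↥A → ↥B → ι → Prop :=
  fun x y i => x.val i = true ∧ y.val i = false

/-- `mL(A × B)`: the monotone formula complexity of the rectangle `A × B`. -/
def mL {ι : Type} (A B : Set (ι → Bool)) : ℕ := Lsize (mKWrect A B)

/-- The monotone KW relation of a monotone function `f`. -/
def mKW {ι : Type} (f : (ι → Bool) → Bool) :
    {x : ι → Bool // f x = true} → {y : ι → Bool // f y = false} → ι → Prop :=
  fun x y i => x.val i = true ∧ y.val i = false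

/-! ### Lifted search problems, discrepancy, reductions -/

/-- The lifted search problem `S ◇ gd`. -/
def liftSP {ι Λ O : Type} (S : (ι → Bool) → O → Prop) (gd : Λ → Λ → Bool) :
    (ι → Λ) → (ι → Λ) → O → Prop :=
  fun x y o => S (fun i => gd (x i) (y i)) o

/-- The discrepancy of a gadget `gd : {0,1}^t × {0,1}^t → {0,1}`. -/
def disc {t : ℕ} (gd : (Fin t → Bool) → (Fin t → Bool) → Bool) : ℝ :=
  sSup {r : ℝ | ∃ A B : Finset (Fin t → Bool),
    r = |((((A ×ˢ B).filter fun uv => gd uv.1 uv.2 = false).card : ℝ) -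
          (((A ×ˢ B).filter fun uv => gd uv.1 uv.2 = true).card : ℝ))| /
        ((2 ^ t : ℝ) * (2 ^ t : ℝ))}

/-- A (rectangular) reduction between communication problems. -/
def Reduces {X Y O X' Y' O' : Type}
    (S : X → Y → O → Prop) (S' : X' → Y' → O' → Prop) : Prop :=
  ∃ (RA : X → X') (RB : Y → Y') (Rout : O' → O),
    ∀ x y o', S' (RA x) (RB y) o' → S x y (Rout o')

/-- An injective reduction between communication problems. -/
def ReducesInj {X Y O X' Y' O' : Type}
    (S : X → Y → O → Prop) (S' : X' → Y' → O' → Prop) : Prop :=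
  ∃ (RA : X → X') (RB : Y → Y') (Rout : O' → O),
    Function.Injective RA ∧ Function.Injective RB ∧
    ∀ x y o', S' (RA x) (RB y) o' → S x y (Rout o')

/-! ### Compositions -/

/-- `mKW_f ◇ mKW_g := mKW_{f ◇ g}` : Alice gets `X ∈ (f◇g)⁻¹(1)`, Bob gets
`Y ∈ (f◇g)⁻¹(0)`, and they must find an entry `(i,j)` with `X i j > Y i j`. -/
def diamondKW {m : ℕ} {ι : Type} (f : (Fin m → Bool) → Bool) (g : (ι → Bool) → Bool) :
    {X : Fin m → ι → Bool // f (fun i => g (X i)) = true} →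
    {Y : Fin m → ι → Bool // f (fun i => g (Y i)) = false} →
    (Fin m × ι) → Prop :=
  fun X Y e => X.val e.1 e.2 = true ∧ Y.val e.1 e.2 = false

/-- `mKW_f ⊛ mKW_g` : same inputs as `mKW_f ◇ mKW_g`, but valid outputs are entries
`(i,j)` with `a_i > b_i` and `X i j > Y i j`, where `a_i = g(X_i)`, `b_i = g(Y_i)`. -/
def starKW {m : ℕ} {ι : Type} (f : (Fin m → Bool) → Bool) (g : (ι → Bool) → Bool) :
    {X : Fin m → ι → Bool // f (fun i => g (X i)) = true} →
    {Y : Fin m → ι → Bool // f (fun i => g (Y i)) = false} →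
    (Fin m × ι) → Prop :=
  fun X Y e => g (X.val e.1) = true ∧ g (Y.val e.1) = false ∧
    X.val e.1 e.2 = true ∧ Y.val e.1 e.2 = false

/-- `mKW_f ⊛ (S ◇ gd)` : Alice gets `X ∈ Λ^{m×ℓ}` and `a ∈ f⁻¹(1)`, Bob gets
`Y ∈ Λ^{m×ℓ}` and `b ∈ f⁻¹(0)`; valid outputs are pairs `(i,o)` with `a_i > b_i`
and `o` a valid output of `S ◇ gd` on the rows `(X_i, Y_i)`. -/
def starLift {m ℓ : ℕ} {Λ O : Type} (f : (Fin m → Bool) → Bool)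
    (S : (Fin ℓ → Bool) → O → Prop) (gd : Λ → Λ → Bool) :
    ((Fin m → Fin ℓ → Λ) × {a : Fin m → Bool // f a = true}) →
    ((Fin m → Fin ℓ → Λ) × {b : Fin m → Bool // f b = false}) →
    (Fin m × O) → Prop :=
  fun Xa Yb io =>
    Xa.2.val io.1 = true ∧ Yb.2.val io.1 = false ∧
      liftSP S gd (Xa.1 io.1) (Yb.1 io.1) io.2

/-! ### Live transcripts -/

/-- `𝒜_{π,W}` : the vectors `a ∈ f⁻¹(1)` such that `(W,a)` is consistent with `π`. -/
def Aset {m ℓ : ℕ} {Λ O : Type} (f : (Fin m → Bool) → Bool)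
    (Pr : Protocol ((Fin m → Fin ℓ → Λ) × {a : Fin m → Bool // f a = true})
                   ((Fin m → Fin ℓ → Λ) × {b : Fin m → Bool // f b = false}) (Fin m × O))
    (π : List Bool) (W : Fin m → Fin ℓ → Λ) : Set (Fin m → Bool) :=
  {a | ∃ h : f a = true, Protocol.followsA Pr π (W, ⟨a, h⟩)}

/-- `ℬ_{π,W}` : the vectors `b ∈ f⁻¹(0)` such that `(W,b)` is consistent with `π`. -/
def Bset {m ℓ : ℕ} {Λ O : Type} (f : (Fin m → Bool) → Bool)
    (Pr : Protocol ((Fin m → Fin ℓ → Λ) × {a : Fin m → Bool // f a = true})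
                   ((Fin m → Fin ℓ → Λ) × {b : Fin m → Bool // f b = false}) (Fin m × O))
    (π : List Bool) (W : Fin m → Fin ℓ → Λ) : Set (Fin m → Bool) :=
  {b | ∃ h : f b = false, Protocol.followsB Pr π (W, ⟨b, h⟩)}

/-- `γ(π)` : the average over uniform `W ∈ Λ^{m×ℓ}` of `mL(𝒜_{π,W} × ℬ_{π,W})`. -/
def gammaM {m ℓ : ℕ} {Λ O : Type} [Fintype Λ] [DecidableEq Λ] (f : (Fin m → Bool) → Bool)
    (Pr : Protocol ((Fin m → Fin ℓ → Λ) × {a : Fin m → Bool // f a = true})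
                   ((Fin m → Fin ℓ → Λ) × {b : Fin m → Bool // f b = false}) (Fin m × O))
    (π : List Bool) : ℝ :=
  (∑ W : Fin m → Fin ℓ → Λ, (mL (Aset f Pr π W) (Bset f Pr π W) : ℝ)) /
    (Fintype.card (Fin m → Fin ℓ → Λ) : ℝ)

/-- A transcript is live (alive) if it is a vertex of the protocol tree and `γ(π) ≥ 4m²`. -/
def LiveT {m ℓ : ℕ} {Λ O : Type} [Fintype Λ] [DecidableEq Λ] (f : (Fin m → Bool) → Bool)
    (Pr : Protocol ((Fin m → Fin ℓ → Λ) × {a : Fin m → Bool // f a = true})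
                   ((Fin m → Fin ℓ → Λ) × {b : Fin m → Bool // f b = false}) (Fin m × O))
    (π : List Bool) : Prop :=
  Protocol.IsTranscript Pr π ∧ 4 * (m : ℝ) ^ 2 ≤ gammaM f Pr π

/-! ### Average degree -/

/-- Projection of a set of strings to the coordinates in `J`. -/
def projSet {N Λ : Type} (W : Set (N → Λ)) (J : Set N) : Set (↥J → Λ) :=
  (fun w (j : ↥J) => w j.val) '' W

/-- Relative average degree: `rAvgDeg_I(W) = (|W| / |W|_{N−I}|) / |Λ|^{|I|}`. -/
def rAvgDeg {N Λ : Type} [Fintype Λ] (W : Set (N → Λ)) (I : Set N) : ℝ :=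
  ((W.ncard : ℝ) / ((projSet W Iᶜ).ncard : ℝ)) / ((Fintype.card Λ : ℝ) ^ I.ncard)

/-- View a set of `m × ℓ` matrices as a set of strings indexed by `Fin m × Fin ℓ`. -/
def matSet {m ℓ : ℕ} {Λ : Type} (WW : Set (Fin m → Fin ℓ → Λ)) : Set (Fin m × Fin ℓ → Λ) :=
  (fun W p => W p.1 p.2) '' WW

/-! ### Hard collections -/

/-- A transcript `π` supports the collection `(𝒲, a^W, b^W)` if for every `W ∈ 𝒲`,
`(W, a^W) ∈ 𝒳_π` and `(W, b^W) ∈ 𝒴_π`. -/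
def SupportsCollection {m ℓ : ℕ} {Λ O : Type} (f : (Fin m → Bool) → Bool)
    (Pr : Protocol ((Fin m → Fin ℓ → Λ) × {a : Fin m → Bool // f a = true})
                   ((Fin m → Fin ℓ → Λ) × {b : Fin m → Bool // f b = false}) (Fin m × O))
    (π : List Bool) (WW : Set (Fin m → Fin ℓ → Λ))
    (aW bW : (Fin m → Fin ℓ → Λ) → (Fin m → Bool)) : Prop :=
  ∀ W ∈ WW, aW W ∈ Aset f Pr π W ∧ bW W ∈ Bset f Pr π W

/-- The collection `(𝒲, a^W, b^W)` is hard: there is a set `R` of revealed rows such that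
(i) every set `I` of unrevealed rows has relative average degree at least `4^{-|I|}` in the
restriction of `𝒲` to the unrevealed rows, and (ii) `a^W|_R ≤ b^{W'}|_R` for all `W, W' ∈ 𝒲`. -/
def HardCollection {m ℓ : ℕ} {Λ : Type} [Fintype Λ] (f : (Fin m → Bool) → Bool)
    (WW : Set (Fin m → Fin ℓ → Λ))
    (aW bW : (Fin m → Fin ℓ → Λ) → (Fin m → Bool)) : Prop :=
  ∃ R : Set (Fin m),
    (∀ I : Set (Fin m), I ⊆ Rᶜ →
      ((1 : ℝ) / 4) ^ I.ncard ≤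
        rAvgDeg (projSet (matSet WW) {p : Fin m × Fin ℓ | p.1 ∉ R})
          {q : ↥{p : Fin m × Fin ℓ | p.1 ∉ R} | q.val.1 ∈ I}) ∧
    (∀ W ∈ WW, ∀ W' ∈ WW, ∀ i ∈ R, aW W i ≤ bW W' i)

/-! ### CNF formulas, Nullstellensatz degree -/

/-- A clause over `ℓ` variables: a set of literals; `(i, true)` is the positive
literal `x_i`, `(i, false)` is the negative literal `¬x_i`. -/
abbrev CnfClause (ℓ : ℕ) := Finset (Fin ℓ × Bool)

/-- An assignment satisfies a clause if some literal is satisfied. -/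
def clauseSat {ℓ : ℕ} (z : Fin ℓ → Bool) (C : CnfClause ℓ) : Prop :=
  ∃ lit ∈ C, z lit.1 = lit.2

/-- The search problem `S_φ` : given an assignment, find a violated clause of `φ`. -/
def searchCNF {ℓ : ℕ} (φ : Finset (CnfClause ℓ)) :
    (Fin ℓ → Bool) → CnfClause ℓ → Prop :=
  fun z C => C ∈ φ ∧ ¬ clauseSat z C

/-- The standard polynomial encoding of a clause. -/
def clausePoly {ℓ : ℕ} (C : CnfClause ℓ) : MvPolynomial (Fin ℓ) (ZMod 2) :=
  ∏ lit ∈ C, (if lit.2 then 1 - MvPolynomial.X lit.1 else MvPolynomial.X lit.1)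

/-- The Nullstellensatz degree of a CNF contradiction `φ` over `F₂`. -/
def NSdeg {ℓ : ℕ} (φ : Finset (CnfClause ℓ)) : ℕ :=
  sInf {d : ℕ | ∃ (q : CnfClause ℓ → MvPolynomial (Fin ℓ) (ZMod 2))
      (r : Fin ℓ → MvPolynomial (Fin ℓ) (ZMod 2)),
      ((∑ C ∈ φ, clausePoly C * q C) +
        ∑ i : Fin ℓ, (MvPolynomial.X i ^ 2 - MvPolynomial.X i) * r i) = 1 ∧
      (∀ C ∈ φ, (clausePoly C * q C).totalDegree ≤ d) ∧
      (∀ i : Fin ℓ, ((MvPolynomial.X i ^ 2 - MvPolynomial.X i) * r i).totalDegree ≤ d)}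

/-- The equality gadget. -/
def eqGadget {Λ : Type} [DecidableEq Λ] : Λ → Λ → Bool := fun u v => decide (u = v)

/-! ### Semi-monotone composition -/

/-- `U_m ◇ mKW_g` : Alice gets `X`, Bob gets `Y`; with `a_i = g(X_i)`, `b_i = g(Y_i)`,
valid outputs are entries `(i,j)` with (`a_i > b_i` and `X i j > Y i j`), or
(`a_i < b_i` and `X i j < Y i j`), or (`a_i = b_i` and `X i j ≠ Y i j`); if `a = b`
the players may output the failure symbol `⊥` (here `none`). -/
def semiU {m : ℕ} {ι : Type} (g : (ι → Bool) → Bool) :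
    (Fin m → ι → Bool) → (Fin m → ι → Bool) → Option (Fin m × ι) → Prop :=
  fun X Y o =>
    match o with
    | none => ∀ i, g (X i) = g (Y i)
    | some e =>
        (g (X e.1) = true ∧ g (Y e.1) = false ∧ X e.1 e.2 = true ∧ Y e.1 e.2 = false) ∨
        (g (X e.1) = false ∧ g (Y e.1) = true ∧ X e.1 e.2 = false ∧ Y e.1 e.2 = true) ∨
        (g (X e.1) = g (Y e.1) ∧ X e.1 e.2 ≠ Y e.1 e.2)

/-! ### Razborov rank measure over F₂ -/

/-- The maximal `F₂`-rank of the restriction of `A` to an `S`-monochromatic rectangle. -/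
def monoMaxRank {X Y O : Type} [Fintype X] [Fintype Y]
    (S : X → Y → O → Prop) (A : Matrix X Y (ZMod 2)) : ℕ :=
  sSup {r : ℕ | ∃ (U : Finset X) (V : Finset Y) (o : O),
    (∀ x ∈ U, ∀ y ∈ V, S x y o) ∧
    r = (A.submatrix (Subtype.val : {x // x ∈ U} → X)
          (Subtype.val : {y // y ∈ V} → Y)).rank}

/-- The Razborov rank measure `μ_{F₂}(S, A)`. -/
def muF2 {X Y O : Type} [Fintype X] [Fintype Y]
    (S : X → Y → O → Prop) (A : Matrix X Y (ZMod 2)) : ℝ :=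
  (A.rank : ℝ) / (monoMaxRank S A : ℝ)

/-! ### Kronecker powers, pattern matrices -/

/-- The `m`-fold Kronecker power of a square matrix `B`, with index type `Fin m → ι`. -/
def kronPow {ι R : Type} [CommMonoid R] (m : ℕ) (B : Matrix ι ι R) :
    Matrix (Fin m → ι) (Fin m → ι) R :=
  Matrix.of fun x y => ∏ i, B (x i) (y i)

/-- The pattern matrix `A_{x,y} = p(eq(x₁,y₁),…,eq(x_ℓ,y_ℓ))` of a multilinear
polynomial `p` with coefficients `phat` over `F₂`. -/
def patternMatrix {Λ : Type} [DecidableEq Λ] (ℓ : ℕ)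
    (phat : Finset (Fin ℓ) → ZMod 2) : Matrix (Fin ℓ → Λ) (Fin ℓ → Λ) (ZMod 2) :=
  Matrix.of fun x y =>
    ∑ T : Finset (Fin ℓ), phat T * ∏ i ∈ T, (if x i = y i then (1 : ZMod 2) else 0)

/-! ### s-t-connectivity -/

/-- The `s`-`t`-connectivity function: the input is the adjacency matrix of a directed
graph on `n` vertices, `s = 0`, `t = n-1`; output is whether `t` is reachable from `s`. -/
def stConn (n : ℕ) : ((Fin n × Fin n) → Bool) → Bool :=
  fun E =>
    if ∀ h : 0 < n,
        Relation.ReflTransGen (fun u v : Fin n => E (u, v) = true)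
          ⟨0, h⟩ ⟨n - 1, Nat.sub_lt h Nat.one_pos⟩
      then true else false

/-! ### The matrix M of the semi-monotone composition theorem -/

/-- The matrix `M` used in the semi-monotone composition theorem, built from a matrix
`A ∈ F₂^{𝒳×𝒴}` (with `𝒳 = range xs`, `𝒴 = range ys` identified with `Fin K` via the
left inverses `ix`, `iy`). -/
def semiM {m n K : ℕ} (g : (Fin n → Bool) → Bool) (xs ys : Fin K → (Fin n → Bool))
    (ix iy : (Fin n → Bool) → Fin K) (A : Matrix (Fin K) (Fin K) (ZMod 2)) :
    Matrix (Fin m → Fin n → Bool) (Fin m → Fin n → Bool) (ZMod 2) :=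
  Matrix.of fun X Y =>
    if (fun i => g (X i)) = (fun i => g (Y i)) then 0
    else ∏ i : Fin m,
      (if g (X i) = true ∧ g (Y i) = false then A (ix (X i)) (iy (Y i))
       else if g (X i) = false ∧ g (Y i) = true then A (ix (Y i)) (iy (X i))
       else if X i = Y i then 1 else 0)

end

/-!
The matrix is a pattern matrix `A x y = f (eq (x₁, y₁), …, eq (x_ℓ, y_ℓ))`, that is, a linear
combination over `F₂` of the matrices `J_T` with `J_T x y = [x = y on T]`. Since
`J_S * J_T = |Λ| ^ |(S ∪ T)ᶜ| • J_{S ∩ T}`, these matrices commute, and for even `|Λ|` all of them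
square to zero except `J_univ = 1`. So `A ^ 2 = 1` as soon as `J_univ` has coefficient `1` in `A`.

The function `f` comes from the Nullstellensatz degree `d` by duality: there is a linear functional
`D` on polynomials with `D 1 = 1` that vanishes on all multiples of clause polynomials of degree
less than `d`, and `f z` is the value of `D` at the polynomial form of the indicator of `z`. The
coefficient of `J_univ` is then `D 1 = 1`. On a monochromatic rectangle one fixed clause is
falsified by every `z = eq (x, y)`, so its polynomial divides all the indicators; expanding the
remaining factors, `D` leaves only the matrices `J_S` with `d ≤ |Sᶜ|`. As `J_S` has rank at most
`|Λ| ^ |S|`, the restricted rank falls short of `|Λ| ^ ℓ` by a factor exponential in `d * log |Λ|`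
once `ℓ ^ 2 ≤ |Λ|`.
-/

lemma charTwo_sum_mul_self_of_commute {R κ : Type*} [Semiring R] [CharP R 2] {f : κ → R}
    (hf : ∀ i j, Commute (f i) (f j)) (s : Finset κ) :
    (∑ i ∈ s, f i) * ∑ i ∈ s, f i = ∑ i ∈ s, f i * f i := by
  induction s using Finset.cons_induction with
  | empty => simp
  | cons i s hi ih =>
    have hcomm : Commute (f i) (∑ j ∈ s, f j) := Commute.sum_right _ _ _ fun j _ ↦ hf i j
    rw [Finset.sum_cons, Finset.sum_cons, ← ih, ← sq, ← sq, ← sq, add_pow_char_of_commute 2 hcomm]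

section MatrixRank

variable {m n K : Type*} [Fintype n] [Field K]

lemma matrix_rank_sum_le {κ : Type*} (s : Finset κ) (A : κ → Matrix m n K) :
    (∑ k ∈ s, A k).rank ≤ ∑ k ∈ s, (A k).rank := by
  refine Finset.le_sum_of_subadditive Matrix.rank (by simp) (fun A B ↦ ?_) s A
  rw [Matrix.rank, Matrix.mulVecLin_add]
  exact (Submodule.finrank_mono (LinearMap.range_add_le _ _)).trans
    (Submodule.finrank_add_le_finrank_add_finrank _ _)

lemma matrix_rank_pos_of_apply_ne_zero {A : Matrix m n K} {i : m} {j : n} (h : A i j ≠ 0) :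
    0 < A.rank :=
  calc 0 < (A.submatrix (fun _ : Unit ↦ i) fun _ : Unit ↦ j).rank := by
        rw [Matrix.rank_of_det_ne_zero (by simpa using h)]
        simp
    _ ≤ A.rank := Matrix.rank_submatrix_le _ _ _

end MatrixRank

section EqJunta

variable {ι Λ R : Type*} [DecidableEq Λ]

/-- The `0/1` matrix recording which strings `x` and `y` over the alphabet `Λ` agree on `S`. Pattern
matrices are the linear combinations of these. It is encoded as a blow-up of the identity matrix
indexed by `S → Λ`, so that its rank is visibly at most `|Λ| ^ |S|`. -/
def eqJunta (Λ R : Type*) [DecidableEq Λ] [Zero R] [One R] (S : Finset ι) :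
    Matrix (ι → Λ) (ι → Λ) R :=
  (1 : Matrix (S → Λ) (S → Λ) R).submatrix S.restrict S.restrict

lemma eqJunta_apply [CommSemiring R] (S : Finset ι) (x y : ι → Λ) :
    eqJunta Λ R S x y = ∏ i ∈ S, if x i = y i then 1 else 0 := by
  simp [eqJunta, Matrix.one_apply, funext_iff, Finset.prod_ite_zero]

lemma eqJunta_univ [Fintype ι] [CommSemiring R] :
    eqJunta Λ R (Finset.univ : Finset ι) = 1 := by
  ext x y
  simp [eqJunta_apply, Matrix.one_apply, funext_iff, Finset.prod_ite_zero]

lemma eqJunta_mul_eqJunta [Fintype ι] [DecidableEq ι] [Fintype Λ] [CommSemiring R]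
    (S T : Finset ι) :
    eqJunta Λ R S * eqJunta Λ R T =
      (Fintype.card Λ : R) ^ (S ∪ T)ᶜ.card • eqJunta Λ R (S ∩ T) := by
  ext x y
  have coordinate (i : ι) :
      (∑ u : Λ, (if i ∈ S then if x i = u then (1 : R) else 0 else 1) *
        if i ∈ T then if u = y i then 1 else 0 else 1) =
      (if i ∈ (S ∪ T)ᶜ then (Fintype.card Λ : R) else 1) *
        if i ∈ S ∩ T then if x i = y i then 1 else 0 else 1 := by
    by_cases hS : i ∈ S <;> by_cases hT : i ∈ T <;> simp [hS, hT]
  calc (eqJunta Λ R S * eqJunta Λ R T) x y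
      = ∑ z : ι → Λ, ∏ i, ((if i ∈ S then if x i = z i then (1 : R) else 0 else 1) *
          if i ∈ T then if z i = y i then 1 else 0 else 1) := by
        simp only [Matrix.mul_apply, eqJunta_apply, Finset.prod_mul_distrib, Finset.prod_ite_mem,
          Finset.univ_inter]
    _ = ∏ i, (if i ∈ (S ∪ T)ᶜ then (Fintype.card Λ : R) else 1) *
          if i ∈ S ∩ T then if x i = y i then 1 else 0 else 1 := by
        simp only [← coordinate, Fintype.prod_sum]
    _ = _ := by
        simp only [Finset.prod_mul_distrib, Finset.prod_ite_mem, Finset.univ_inter,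
          Finset.prod_const, Matrix.smul_apply, smul_eq_mul, eqJunta_apply]

lemma commute_eqJunta [Fintype ι] [DecidableEq ι] [Fintype Λ] [CommSemiring R] (S T : Finset ι) :
    Commute (eqJunta Λ R S) (eqJunta Λ R T) := by
  rw [Commute, SemiconjBy, eqJunta_mul_eqJunta, eqJunta_mul_eqJunta, Finset.union_comm,
    Finset.inter_comm]

lemma eqJunta_mul_self_of_ne_univ [Fintype ι] [DecidableEq ι] [Fintype Λ] [CommSemiring R]
    [CharP R 2] (hΛ : Even (Fintype.card Λ)) {S : Finset ι} (hS : S ≠ Finset.univ) :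
    eqJunta Λ R S * eqJunta Λ R S = 0 := by
  have card_ne_zero : Sᶜ.card ≠ 0 := by simpa using hS
  rw [eqJunta_mul_eqJunta, Finset.union_self, CharTwo.natCast_eq_ite, if_pos hΛ,
    zero_pow card_ne_zero, zero_smul]

lemma rank_sum_smul_eqJunta_le [Fintype ι] [DecidableEq ι] [Fintype Λ] [Field R]
    (𝒮 : Finset (Finset ι)) (c : Finset ι → R) :
    (∑ S ∈ 𝒮, c S • eqJunta Λ R S).rank ≤ ∑ S ∈ 𝒮, Fintype.card Λ ^ S.card := by
  refine (matrix_rank_sum_le _ _).trans (Finset.sum_le_sum fun S _ ↦ ?_)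
  calc (c S • eqJunta Λ R S).rank ≤ Fintype.card (S → Λ) := by
        rw [eqJunta, ← Pi.smul_apply, ← Pi.smul_apply, ← Matrix.submatrix_smul]
        exact (Matrix.rank_submatrix_le _ _ _).trans (Matrix.rank_le_card_width _)
    _ = Fintype.card Λ ^ S.card := by simp

end EqJunta

section PatternMatrix

variable {ℓ : ℕ} {Λ : Type} [DecidableEq Λ]

lemma patternMatrix_eq_sum (p : Finset (Fin ℓ) → ZMod 2) :
    patternMatrix (Λ := Λ) ℓ p = ∑ T, p T • eqJunta Λ (ZMod 2) T := by
  ext x y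
  simp [patternMatrix, Matrix.sum_apply, eqJunta_apply]

lemma isSymm_patternMatrix (p : Finset (Fin ℓ) → ZMod 2) :
    (patternMatrix (Λ := Λ) ℓ p).IsSymm := by
  ext x y
  simp only [Matrix.transpose_apply, patternMatrix, Matrix.of_apply, eq_comm]

lemma patternMatrix_mul_self [Fintype Λ] [Nonempty Λ] (hΛ : Even (Fintype.card Λ))
    {p : Finset (Fin ℓ) → ZMod 2} (hp : p Finset.univ = 1) :
    patternMatrix (Λ := Λ) ℓ p * patternMatrix ℓ p = 1 := by
  rw [patternMatrix_eq_sum, charTwo_sum_mul_self_of_commute fun S T ↦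
    ((commute_eqJunta S T).smul_left _).smul_right _, Finset.sum_eq_single Finset.univ]
  · rw [hp, one_smul, eqJunta_univ, one_mul]
  · intro T _ hT
    rw [smul_mul_smul_comm, eqJunta_mul_self_of_ne_univ hΛ hT, smul_zero]
  · simp

end PatternMatrix

section Clause

open MvPolynomial

variable {ℓ : ℕ}

/-- The polynomial form of the indicator of `{x | x i = z i for all i ∈ s}`. -/
noncomputable def indicatorPoly (z : Fin ℓ → Bool) (s : Finset (Fin ℓ)) :
    MvPolynomial (Fin ℓ) (ZMod 2) :=
  ∏ i ∈ s, if z i then X i else 1 - X i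

lemma totalDegree_indicatorPoly_le (z : Fin ℓ → Bool) (s : Finset (Fin ℓ)) :
    (indicatorPoly z s).totalDegree ≤ s.card := by
  refine (totalDegree_finsetProd _ _).trans ?_
  rw [Finset.card_eq_sum_ones]
  refine Finset.sum_le_sum fun i _ ↦ ?_
  split_ifs
  · exact (totalDegree_X i).le
  · exact (totalDegree_sub _ _).trans (by simp)

/-- In characteristic two `X i = 1 + (1 - X i)`, so every factor is `[z i] + (1 - X i)`: the
coefficient of `∏ i ∈ S, [z i]` has degree only `|s \ S|`. -/
lemma indicatorPoly_eq_sum (z : Fin ℓ → Bool) (s : Finset (Fin ℓ)) :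
    indicatorPoly z s =
      ∑ S ∈ s.powerset, (∏ i ∈ S, if z i then 1 else 0 : ZMod 2) • indicatorPoly ⊥ (s \ S) := by
  have factor (i : Fin ℓ) : (if z i then X i else 1 - X i : MvPolynomial (Fin ℓ) (ZMod 2)) =
      C (if z i then 1 else 0) + (1 - X i) := by
    split_ifs
    · rw [C_1, CharTwo.sub_eq_add, CharTwo.add_cancel_left]
    · simp
  simp [indicatorPoly, factor, Finset.prod_add, ← C_mul', map_prod]

/-- The set of variables that occur in a clause. -/
def clauseVars (C : CnfClause ℓ) : Finset (Fin ℓ) :=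
  C.image Prod.fst

lemma eq_not_of_not_clauseSat {z : Fin ℓ → Bool} {C : CnfClause ℓ} (hz : ¬ clauseSat z C)
    {lit : Fin ℓ × Bool} (hlit : lit ∈ C) : lit.2 = !z lit.1 :=
  Bool.eq_not.2 fun h ↦ hz ⟨lit, hlit, h.symm⟩

lemma clausePoly_eq_indicatorPoly {z : Fin ℓ → Bool} {C : CnfClause ℓ} (hz : ¬ clauseSat z C) :
    clausePoly C = indicatorPoly z (clauseVars C) := by
  have injOn_fst : Set.InjOn Prod.fst (C : Set (Fin ℓ × Bool)) := fun a ha b hb hab ↦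
    Prod.ext hab (by rw [eq_not_of_not_clauseSat hz ha, eq_not_of_not_clauseSat hz hb, hab])
  rw [indicatorPoly, clauseVars, Finset.prod_image injOn_fst, clausePoly]
  refine Finset.prod_congr rfl fun lit hlit ↦ ?_
  rw [eq_not_of_not_clauseSat hz hlit]
  cases z lit.1 <;> simp

lemma indicatorPoly_univ_eq_clausePoly_mul {z : Fin ℓ → Bool} {C : CnfClause ℓ}
    (hz : ¬ clauseSat z C) :
    indicatorPoly z Finset.univ = clausePoly C * indicatorPoly z (clauseVars C)ᶜ := by
  rw [clausePoly_eq_indicatorPoly hz, indicatorPoly, indicatorPoly, indicatorPoly,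
    Finset.prod_mul_prod_compl]

lemma totalDegree_clausePoly_mul_indicatorPoly_le {z : Fin ℓ → Bool} {C : CnfClause ℓ}
    (hz : ¬ clauseSat z C) {S : Finset (Fin ℓ)} (hS : S ⊆ (clauseVars C)ᶜ) (w : Fin ℓ → Bool) :
    (clausePoly C * indicatorPoly w ((clauseVars C)ᶜ \ S)).totalDegree ≤ Sᶜ.card := by
  rw [clausePoly_eq_indicatorPoly hz]
  calc _ ≤ (clauseVars C).card + ((clauseVars C)ᶜ \ S).card :=
        (totalDegree_mul _ _).trans <|
          add_le_add (totalDegree_indicatorPoly_le _ _) (totalDegree_indicatorPoly_le _ _)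
    _ = Sᶜ.card := by
        have := Finset.card_le_card hS
        have := (clauseVars C).card_le_univ
        simp only [Finset.card_sdiff_of_subset hS, Finset.card_compl] at *
        omega

end Clause

section Design

variable {ℓ : ℕ} {φ : Finset (CnfClause ℓ)} {d : ℕ}
  {D : MvPolynomial (Fin ℓ) (ZMod 2) →ₗ[ZMod 2] ZMod 2}

/-- A degree-`d` design for `φ`: a linear functional certifying by duality that `1` is not a
combination of multiples of the clause polynomials of degree less than `d`. -/
structure IsDesign (φ : Finset (CnfClause ℓ)) (d : ℕ)
    (D : MvPolynomial (Fin ℓ) (ZMod 2) →ₗ[ZMod 2] ZMod 2) : Prop where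
  map_one : D 1 = 1
  map_clausePoly_mul : ∀ C ∈ φ, ∀ q, (clausePoly C * q).totalDegree < d → D (clausePoly C * q) = 0

/-- The multiples of the clause polynomial of `C` that have degree at most `d`. -/
noncomputable def clauseMultiples (d : ℕ) (C : CnfClause ℓ) :
    Submodule (ZMod 2) (MvPolynomial (Fin ℓ) (ZMod 2)) :=
  LinearMap.range (LinearMap.mulLeft (ZMod 2) (clausePoly C)) ⊓
    MvPolynomial.restrictTotalDegree (Fin ℓ) (ZMod 2) d

lemma mem_clauseMultiples {C : CnfClause ℓ} {f : MvPolynomial (Fin ℓ) (ZMod 2)} :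
    f ∈ clauseMultiples d C ↔ ∃ q, clausePoly C * q = f ∧ (clausePoly C * q).totalDegree ≤ d := by
  simp only [clauseMultiples, Submodule.mem_inf, LinearMap.mem_range, LinearMap.mulLeft_apply,
    MvPolynomial.mem_restrictTotalDegree, ← exists_and_right]
  exact exists_congr fun q ↦ and_congr_right fun h ↦ by rw [h]

lemma NSdeg_le_of_one_mem (h : 1 ∈ ⨆ C ∈ φ, clauseMultiples d C) : NSdeg φ ≤ d := by
  obtain ⟨f, hf⟩ := (Submodule.mem_iSup_finset_iff_exists_sum _ _).1 h
  choose q hq hdeg using fun C ↦ mem_clauseMultiples.1 (f C).2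
  exact Nat.sInf_le ⟨q, 0, by simpa [hq] using hf, fun C _ ↦ hdeg C, by simp⟩

lemma exists_isDesign (hφ : 0 < NSdeg φ) : ∃ D, IsDesign φ (NSdeg φ) D := by
  have one_notMem : 1 ∉ ⨆ C ∈ φ, clauseMultiples (NSdeg φ - 1) C := fun h ↦ by
    have := NSdeg_le_of_one_mem h
    omega
  obtain ⟨D, hone, hker⟩ := Submodule.exists_le_ker_of_notMem one_notMem
  refine ⟨D, Fin.eq_one_of_ne_zero _ hone, fun C hC q hq ↦ hker ?_⟩
  exact Submodule.mem_iSup_of_mem C <| Submodule.mem_iSup_of_mem hC <|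
    mem_clauseMultiples.2 ⟨q, rfl, Nat.le_sub_one_of_lt hq⟩

/-- The multilinear coefficients of the function `z ↦ D (indicatorPoly z univ)`, which evaluates
the functional `D` on point indicators. -/
noncomputable def pointCoeff (D : MvPolynomial (Fin ℓ) (ZMod 2) →ₗ[ZMod 2] ZMod 2)
    (T : Finset (Fin ℓ)) : ZMod 2 :=
  D (indicatorPoly ⊥ Tᶜ)

lemma IsDesign.pointCoeff_univ (hD : IsDesign φ d D) : pointCoeff D Finset.univ = 1 := by
  simp [pointCoeff, indicatorPoly, hD.map_one]

variable {Λ : Type} [DecidableEq Λ]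

lemma map_mul_indicatorPoly_eqGadget (P : MvPolynomial (Fin ℓ) (ZMod 2)) (s : Finset (Fin ℓ))
    (x y : Fin ℓ → Λ) :
    D (P * indicatorPoly (fun i ↦ eqGadget (x i) (y i)) s) =
      ∑ S ∈ s.powerset, D (P * indicatorPoly ⊥ (s \ S)) * eqJunta Λ (ZMod 2) S x y := by
  simp only [indicatorPoly_eq_sum _ s, Finset.mul_sum, map_sum, mul_smul_comm, map_smul,
    smul_eq_mul, eqGadget, decide_eq_true_eq, eqJunta_apply, mul_comm]

lemma patternMatrix_pointCoeff_apply (x y : Fin ℓ → Λ) :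
    patternMatrix ℓ (pointCoeff D) x y =
      D (indicatorPoly (fun i ↦ eqGadget (x i) (y i)) Finset.univ) := by
  rw [← one_mul (indicatorPoly _ _), map_mul_indicatorPoly_eqGadget, patternMatrix_eq_sum,
    Matrix.sum_apply]
  simp [pointCoeff, Finset.compl_eq_univ_sdiff]

/-- On such a rectangle the point indicators are multiples of `clausePoly C`, so all terms of their
expansion of degree less than `d` are killed by the design. -/
lemma IsDesign.patternMatrix_apply_of_not_clauseSat (hD : IsDesign φ d D) {C : CnfClause ℓ}
    (hC : C ∈ φ) {x y : Fin ℓ → Λ} (hxy : ¬ clauseSat (fun i ↦ eqGadget (x i) (y i)) C) :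
    patternMatrix ℓ (pointCoeff D) x y =
      (∑ S ∈ (clauseVars C)ᶜ.powerset with d ≤ Sᶜ.card,
        D (clausePoly C * indicatorPoly ⊥ ((clauseVars C)ᶜ \ S)) • eqJunta Λ (ZMod 2) S) x y := by
  rw [patternMatrix_pointCoeff_apply, indicatorPoly_univ_eq_clausePoly_mul hxy,
    map_mul_indicatorPoly_eqGadget, Matrix.sum_apply]
  simp only [Matrix.smul_apply, smul_eq_mul]
  refine (Finset.sum_filter_of_ne fun S hS hne ↦ ?_).symm
  by_contra! hlt
  refine hne (mul_eq_zero_of_left (hD.map_clausePoly_mul C hC _ ?_) _)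
  exact (totalDegree_clausePoly_mul_indicatorPoly_le hxy (Finset.mem_powerset.1 hS) _).trans_lt hlt

lemma IsDesign.rank_submatrix_patternMatrix_le [Fintype Λ] (hD : IsDesign φ d D)
    {C : CnfClause ℓ} (hC : C ∈ φ) {U V : Type*} [Fintype V]
    {x : U → Fin ℓ → Λ} {y : V → Fin ℓ → Λ}
    (hxy : ∀ u v, ¬ clauseSat (fun i ↦ eqGadget (x u i) (y v i)) C) :
    ((patternMatrix ℓ (pointCoeff D)).submatrix x y).rank ≤
      ∑ S : Finset (Fin ℓ) with d ≤ Sᶜ.card, Fintype.card Λ ^ S.card := by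
  set 𝒮 := {S ∈ (clauseVars C)ᶜ.powerset | d ≤ Sᶜ.card}
  set c : Finset (Fin ℓ) → ZMod 2 :=
    fun S ↦ D (clausePoly C * indicatorPoly ⊥ ((clauseVars C)ᶜ \ S))
  have submatrix_eq : (patternMatrix ℓ (pointCoeff D)).submatrix x y =
      (∑ S ∈ 𝒮, c S • eqJunta Λ (ZMod 2) S).submatrix x y := by
    ext u v
    exact hD.patternMatrix_apply_of_not_clauseSat hC (hxy u v)
  calc ((patternMatrix ℓ (pointCoeff D)).submatrix x y).rank
      ≤ (∑ S ∈ 𝒮, c S • eqJunta Λ (ZMod 2) S).rank := by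
        rw [submatrix_eq]
        exact Matrix.rank_submatrix_le _ _ _
    _ ≤ ∑ S ∈ 𝒮, Fintype.card Λ ^ S.card := rank_sum_smul_eqJunta_le _ _
    _ ≤ _ := Finset.sum_le_sum_of_subset (Finset.filter_subset_filter _ (Finset.subset_univ _))

end Design

section RankMeasure

variable {X Y O : Type} [Fintype X] [Fintype Y] {S : X → Y → O → Prop} {A : Matrix X Y (ZMod 2)}

lemma monoMaxRank_le {r : ℕ}
    (h : ∀ (U : Finset X) (V : Finset Y) (o : O), U.Nonempty → V.Nonempty →
      (∀ x ∈ U, ∀ y ∈ V, S x y o) →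
      (A.submatrix (Subtype.val : {x // x ∈ U} → X) (Subtype.val : {y // y ∈ V} → Y)).rank ≤ r) :
    monoMaxRank S A ≤ r := by
  refine csSup_le' ?_
  rintro _ ⟨U, V, o, hUV, rfl⟩
  rcases U.eq_empty_or_nonempty with rfl | hU
  · exact (Matrix.rank_le_card_height _).trans (by simp)
  rcases V.eq_empty_or_nonempty with rfl | hV
  · exact (Matrix.rank_le_card_width _).trans (by simp)
  exact h U V o hU hV hUV

lemma monoMaxRank_le_rank : monoMaxRank S A ≤ A.rank :=
  monoMaxRank_le fun _ _ _ _ _ _ ↦ Matrix.rank_submatrix_le _ _ _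

lemma rank_submatrix_le_monoMaxRank {U : Finset X} {V : Finset Y} {o : O}
    (hUV : ∀ x ∈ U, ∀ y ∈ V, S x y o) :
    (A.submatrix (Subtype.val : {x // x ∈ U} → X) (Subtype.val : {y // y ∈ V} → Y)).rank ≤
      monoMaxRank S A := by
  refine le_csSup ⟨A.rank, ?_⟩ ⟨U, V, o, hUV, rfl⟩
  rintro _ ⟨U, V, o, -, rfl⟩
  exact Matrix.rank_submatrix_le _ _ _

lemma monoMaxRank_pos (hS : ∀ x y, ∃ o, S x y o) (hA : A ≠ 0) : 0 < monoMaxRank S A := by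
  obtain ⟨x, y, hxy⟩ : ∃ x y, A x y ≠ 0 := by
    by_contra! h
    exact hA (Matrix.ext h)
  obtain ⟨o, ho⟩ := hS x y
  exact (matrix_rank_pos_of_apply_ne_zero (i := ⟨x, by simp⟩) (j := ⟨y, by simp⟩) hxy).trans_le
    (rank_submatrix_le_monoMaxRank (U := {x}) (V := {y}) (o := o) (by simpa))

lemma one_le_muF2 (hS : ∀ x y, ∃ o, S x y o) (hA : A ≠ 0) : 1 ≤ muF2 S A := by
  rw [muF2, one_le_div (by exact_mod_cast monoMaxRank_pos hS hA)]
  exact_mod_cast monoMaxRank_le_rank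

end RankMeasure

section Counting

/-- On the range of summation `1 ≤ s ^ d * s⁻¹ ^ |Sᶜ|`, which reduces the tail sum to the full
binomial expansion, as in Chernoff's bound. -/
lemma sum_pow_card_le {α : Type*} [Fintype α] [DecidableEq α] {d : ℕ} (hd : 0 < d) {q s : ℝ}
    (hq : 0 < q) (hs₀ : 0 < s) (hs₁ : s ≤ 1) :
    ∑ S : Finset α with d ≤ Sᶜ.card, q ^ S.card ≤
      q ^ Fintype.card α * s ^ d * ((1 + (q * s)⁻¹) ^ Fintype.card α - 1) := by
  have term_le (T : Finset α) (hT : d ≤ T.card) :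
      q ^ Tᶜ.card ≤ q ^ Fintype.card α * s ^ d * (q * s)⁻¹ ^ T.card := by
    rw [Finset.card_compl, pow_sub₀ _ hq.ne' T.card_le_univ, inv_pow, mul_pow, mul_inv, mul_assoc]
    gcongr
    rw [mul_left_comm]
    refine le_mul_of_one_le_right (by positivity) ?_
    rw [← div_eq_mul_inv, one_le_div (by positivity)]
    exact pow_le_pow_of_le_one hs₀.le hs₁ hT
  have sum_nonempty : ∑ T : Finset α with T ≠ ∅, (q * s)⁻¹ ^ T.card =
      (1 + (q * s)⁻¹) ^ Fintype.card α - 1 := by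
    rw [add_comm, ← Fintype.sum_pow_mul_eq_add_pow, Finset.filter_ne',
      Finset.sum_erase_eq_sub (Finset.mem_univ _)]
    simp
  calc ∑ S : Finset α with d ≤ Sᶜ.card, q ^ S.card
      = ∑ T : Finset α with d ≤ T.card, q ^ Tᶜ.card := by
        simp only [Finset.sum_filter]
        exact Fintype.sum_bijective compl compl_bijective _ _ fun S ↦ by simp
    _ ≤ ∑ T : Finset α with d ≤ T.card, q ^ Fintype.card α * s ^ d * (q * s)⁻¹ ^ T.card :=
        Finset.sum_le_sum fun T hT ↦ term_le T (Finset.mem_filter.1 hT).2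
    _ ≤ ∑ T : Finset α with T ≠ ∅, q ^ Fintype.card α * s ^ d * (q * s)⁻¹ ^ T.card := by
        refine Finset.sum_le_sum_of_subset_of_nonneg (fun T ↦ ?_) fun _ _ _ ↦ by positivity
        simp only [Finset.mem_filter_univ, ← Finset.nonempty_iff_ne_empty, ← Finset.card_pos]
        exact hd.trans_le
    _ = _ := by rw [← Finset.mul_sum, sum_nonempty]

lemma eight_mul_pow_five_le {ℓ q : ℕ} (hq : 2 ≤ q) (hℓ : ℓ ^ 2 ≤ q) : 8 * ℓ ^ 5 ≤ q ^ 4 := by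
  rcases Nat.lt_or_ge ℓ 2 with h | h
  · calc 8 * ℓ ^ 5 ≤ 8 * 1 ^ 5 := by gcongr; omega
      _ ≤ 2 ^ 4 := by norm_num
      _ ≤ q ^ 4 := by gcongr
  · calc 8 * ℓ ^ 5 = 2 ^ 3 * ℓ ^ 5 := by norm_num
      _ ≤ ℓ ^ 3 * ℓ ^ 5 := by gcongr
      _ = (ℓ ^ 2) ^ 4 := by ring
      _ ≤ q ^ 4 := by gcongr

/-- The exponent comes from `ℓ * q ^ (-4 / 5) ≤ log 2`, whose extremal case is `ℓ = 2`, `q = 4`. -/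
lemma one_add_rpow_pow_le_two {ℓ q : ℕ} (hq : 2 ≤ q) (hℓ : ℓ ^ 2 ≤ q) :
    (1 + (q : ℝ) ^ (-(4 / 5) : ℝ)) ^ ℓ ≤ 2 := by
  set x : ℝ := (q : ℝ) ^ (-(4 / 5) : ℝ)
  have hq₀ : (0 : ℝ) < q := by positivity
  have hx : x ^ 5 * (q : ℝ) ^ 4 = 1 := by
    rw [← Real.rpow_mul_natCast hq₀.le, ← Real.rpow_natCast, ← Real.rpow_add hq₀]
    norm_num
  have mul_le_log_two : ℓ * x ≤ Real.log 2 := by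
    refine le_of_pow_le_pow_left₀ (n := 5) (by norm_num) (by positivity) ?_
    have : (8 * ℓ ^ 5 : ℝ) ≤ q ^ 4 := mod_cast eight_mul_pow_five_le hq hℓ
    calc (ℓ * x) ^ 5 = 1 / 8 * (x ^ 5 * (8 * ℓ ^ 5)) := by ring
      _ ≤ 1 / 8 * (x ^ 5 * q ^ 4) := by gcongr
      _ ≤ (0.69 : ℝ) ^ 5 := by rw [hx]; norm_num
      _ ≤ Real.log 2 ^ 5 := by gcongr; linarith [Real.log_two_gt_d9]
  calc (1 + x) ^ ℓ ≤ Real.exp x ^ ℓ := by gcongr; linarith [Real.add_one_le_exp x]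
    _ = Real.exp (ℓ * x) := (Real.exp_nat_mul x ℓ).symm
    _ ≤ 2 := (Real.le_log_iff_exp_le two_pos).1 mul_le_log_two

lemma sum_pow_card_le_of_sq_le {α : Type*} [Fintype α] [DecidableEq α] {d q : ℕ} (hd : 0 < d)
    (hq : 2 ≤ q) (hα : Fintype.card α ^ 2 ≤ q) :
    ∑ S : Finset α with d ≤ Sᶜ.card, (q : ℝ) ^ S.card ≤
      (q : ℝ) ^ Fintype.card α * ((q : ℝ) ^ (-(1 / 5) : ℝ)) ^ d := by
  have hq₀ : (0 : ℝ) < q := by positivity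
  have hq₁ : (1 : ℝ) ≤ q := by exact_mod_cast one_le_two.trans hq
  have inv_eq : ((q : ℝ) * (q : ℝ) ^ (-(1 / 5) : ℝ))⁻¹ = (q : ℝ) ^ (-(4 / 5) : ℝ) := by
    rw [← Real.rpow_one_add' hq₀.le (by norm_num), ← Real.rpow_neg hq₀.le]
    norm_num
  calc ∑ S : Finset α with d ≤ Sᶜ.card, (q : ℝ) ^ S.card
      ≤ (q : ℝ) ^ Fintype.card α * ((q : ℝ) ^ (-(1 / 5) : ℝ)) ^ d *
          ((1 + (q : ℝ) ^ (-(4 / 5) : ℝ)) ^ Fintype.card α - 1) := by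
        rw [← inv_eq]
        exact sum_pow_card_le hd hq₀ (by positivity)
          (Real.rpow_le_one_of_one_le_of_nonpos hq₁ (by norm_num))
    _ ≤ _ := by
        refine mul_le_of_le_one_right (by positivity) ?_
        linarith [one_add_rpow_pow_le_two hq hα]

end Counting

section Main

variable {ℓ : ℕ} {Λ O : Type} [Fintype Λ] [DecidableEq Λ] {φ : Finset (CnfClause ℓ)}
  {S : (Fin ℓ → Λ) → (Fin ℓ → Λ) → O → Prop}

lemma IsDesign.monoMaxRank_patternMatrix_le {d : ℕ}
    {D : MvPolynomial (Fin ℓ) (ZMod 2) →ₗ[ZMod 2] ZMod 2} (hD : IsDesign φ d D)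
    {Rout : O → CnfClause ℓ}
    (hred : ∀ x y o, S x y o → liftSP (searchCNF φ) eqGadget x y (Rout o)) :
    monoMaxRank S (patternMatrix ℓ (pointCoeff D)) ≤
      ∑ T : Finset (Fin ℓ) with d ≤ Tᶜ.card, Fintype.card Λ ^ T.card := by
  refine monoMaxRank_le fun U V o ⟨x, hx⟩ ⟨y, hy⟩ hUV ↦ ?_
  have hC : Rout o ∈ φ := (hred x y o (hUV x hx y hy)).1
  exact hD.rank_submatrix_patternMatrix_le hC
    fun u v ↦ (hred u v o (hUV u u.2 v v.2)).2

lemma IsDesign.rpow_le_muF2 [Nonempty Λ] {d : ℕ}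
    {D : MvPolynomial (Fin ℓ) (ZMod 2) →ₗ[ZMod 2] ZMod 2} (hD : IsDesign φ d D) (hd : 0 < d)
    (hΛ : Even (Fintype.card Λ)) (hℓ : ℓ ^ 2 ≤ Fintype.card Λ) (hS : ∀ x y, ∃ o, S x y o)
    {Rout : O → CnfClause ℓ}
    (hred : ∀ x y o, S x y o → liftSP (searchCNF φ) eqGadget x y (Rout o)) :
    (Fintype.card Λ : ℝ) ^ (1 / 5 * d : ℝ) ≤ muF2 S (patternMatrix ℓ (pointCoeff D)) := by
  set q := Fintype.card Λ with hq_def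
  set A : Matrix (Fin ℓ → Λ) (Fin ℓ → Λ) (ZMod 2) := patternMatrix ℓ (pointCoeff D)
  have hq : 0 < q := Fintype.card_pos
  have hA : IsUnit A := IsUnit.of_mul_eq_one A (patternMatrix_mul_self hΛ hD.pointCoeff_univ)
  have rank_eq : (A.rank : ℝ) = (q : ℝ) ^ ℓ := by simp [Matrix.rank_of_isUnit A hA, hq_def]
  have monoMaxRank_le : (monoMaxRank S A : ℝ) ≤ (q : ℝ) ^ ℓ / (q : ℝ) ^ (1 / 5 * d : ℝ) :=
    calc (monoMaxRank S A : ℝ) ≤ ∑ T : Finset (Fin ℓ) with d ≤ Tᶜ.card, (q : ℝ) ^ T.card :=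
          mod_cast hD.monoMaxRank_patternMatrix_le hred
      _ ≤ (q : ℝ) ^ ℓ * ((q : ℝ) ^ (-(1 / 5) : ℝ)) ^ d := by
          simpa using sum_pow_card_le_of_sq_le (α := Fin ℓ) hd (Nat.le_of_dvd hq hΛ.two_dvd)
            (by simpa using hℓ)
      _ = (q : ℝ) ^ ℓ / (q : ℝ) ^ (1 / 5 * d : ℝ) := by
          rw [← Real.rpow_mul_natCast q.cast_nonneg, neg_mul, Real.rpow_neg q.cast_nonneg,
            ← div_eq_mul_inv]
  rw [muF2, rank_eq, le_div_iff₀ (by exact_mod_cast monoMaxRank_pos hS hA.ne_zero)]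
  rwa [le_div_iff₀' (by positivity)] at monoMaxRank_le

theorem razborov_matrix_for_mKW_general [Nonempty Λ] (hS : ∀ x y, ∃ o, S x y o)
    (Rout : O → CnfClause ℓ)
    (hred : ∀ x y o, S x y o → liftSP (searchCNF φ) eqGadget x y (Rout o))
    (hΛ : Fintype.card Λ = 1 ∨ Even (Fintype.card Λ)) (hℓ : ℓ ^ 2 ≤ Fintype.card Λ) :
    ∃ A : Matrix (Fin ℓ → Λ) (Fin ℓ → Λ) (ZMod 2), A.IsSymm ∧ A * A = 1 ∧
      1 / 5 * NSdeg φ * Real.logb 2 (Fintype.card Λ) ≤ Real.logb 2 (muF2 S A) := by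
  by_cases htrivial : NSdeg φ = 0 ∨ Fintype.card Λ = 1
  · refine ⟨1, Matrix.isSymm_one, one_mul 1, ?_⟩
    have := Real.logb_nonneg one_lt_two (one_le_muF2 hS one_ne_zero)
    rcases htrivial with h | h <;> simpa [h]
  obtain ⟨hd, hone⟩ := not_or.1 htrivial
  obtain ⟨D, hD⟩ := exists_isDesign (Nat.pos_of_ne_zero hd)
  have heven := hΛ.resolve_left hone
  refine ⟨patternMatrix ℓ (pointCoeff D), isSymm_patternMatrix _,
    patternMatrix_mul_self heven hD.pointCoeff_univ, ?_⟩
  rw [← Real.logb_rpow_eq_mul_logb_of_pos (by positivity)]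
  exact Real.logb_le_logb_of_le one_lt_two (by positivity)
    (hD.rpow_le_muF2 (Nat.pos_of_ne_zero hd) heven hℓ hS hred)

end Main

lemma exists_true_false_of_monotone {ι : Type*} {g : (ι → Bool) → Bool} (hg : Monotone g)
    {x y : ι → Bool} (hx : g x = true) (hy : g y = false) : ∃ j, x j = true ∧ y j = false := by
  by_contra! h
  have hxy : x ≤ y := fun j ↦ Bool.le_iff_imp.2 fun hj ↦ by simpa using h j hj
  simpa [hy] using Bool.le_iff_imp.1 (hg hxy) hx

lemma sq_le_two_pow_of_two_mul_logb_le {ℓ t : ℕ} (h : 2 * Real.logb 2 ℓ ≤ t) : ℓ ^ 2 ≤ 2 ^ t := by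
  rcases ℓ.eq_zero_or_pos with rfl | hℓ
  · simp
  have : (ℓ : ℝ) ^ 2 ≤ 2 ^ t := by
    rw [← Real.rpow_natCast 2 t, ← Real.logb_le_iff_le_rpow one_lt_two (by positivity),
      Real.logb_pow]
    exact_mod_cast h
  exact_mod_cast this

lemma card_bool_strings_eq_one_or_even (t : ℕ) :
    Fintype.card (Fin t → Bool) = 1 ∨ Even (Fintype.card (Fin t → Bool)) := by
  rcases eq_or_ne t 0 with rfl | ht
  · simp
  · simp [Nat.even_pow, ht]

/-- Given an injective reduction from `S_φ ◇ eq` to `mKW_g` with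
input maps `RA`, `RB`, there is a matrix `A ∈ F₂^{𝒳×𝒴}` (indexed by `Λ^ℓ` on both
sides via the bijections `RA`, `RB`) that is symmetric, satisfies `A² = I`, and
satisfies `log₂ μ_{F₂}(mKW_{𝒳×𝒴}, A) ≥ κ·NS_{F₂}(φ)·t`. -/
theorem razborov_matrix_for_mKW :
    ∃ κ : ℝ, 0 < κ ∧
      ∀ (n ℓ t : ℕ) (g : (Fin n → Bool) → Bool) (φ : Finset (CnfClause ℓ))
        (RA RB : (Fin ℓ → (Fin t → Bool)) → (Fin n → Bool))
        (Rout : Fin n → CnfClause ℓ),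
        Monotone g → (∃ x, g x = true) → (∃ x, g x = false) →
        (∀ z, ∃ C ∈ φ, ¬ clauseSat z C) →
        2 * Real.logb 2 (ℓ : ℝ) ≤ (t : ℝ) →
        (∀ x, g (RA x) = true) → (∀ y, g (RB y) = false) →
        Function.Injective RA → Function.Injective RB →
        (∀ x y j, (RA x) j = true ∧ (RB y) j = false →
          liftSP (searchCNF φ) (eqGadget (Λ := Fin t → Bool)) x y (Rout j)) →
        ∃ A : Matrix (Fin ℓ → (Fin t → Bool)) (Fin ℓ → (Fin t → Bool)) (ZMod 2),
          A.IsSymm ∧ A * A = 1 ∧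
          κ * (NSdeg φ : ℝ) * (t : ℝ) ≤
            Real.logb 2
              (muF2 (fun x y (j : Fin n) => (RA x) j = true ∧ (RB y) j = false) A) := by
  refine ⟨1 / 5, by norm_num, ?_⟩
  intro n ℓ t g φ RA RB Rout hg _ _ _ ht hRA hRB _ _ hred
  have hS (x y : Fin ℓ → Fin t → Bool) : ∃ j, RA x j = true ∧ RB y j = false :=
    exists_true_false_of_monotone hg (hRA x) (hRB y)
  have hℓ : ℓ ^ 2 ≤ Fintype.card (Fin t → Bool) := by
    simpa using sq_le_two_pow_of_two_mul_logb_le ht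
  simpa [Real.logb_pow] using
    razborov_matrix_for_mKW_general hS Rout hred (card_bool_strings_eq_one_or_even t) hℓ
end

section
/- Let K, m ≥ 1, and let A ∈ F₂^{K×K} be a matrix satisfying A² = I_K. Let B ∈ F₂^{2K×2K} be the block matrix with blocks [[I_K, A],[A, I_K]], and let B^{⊗m} denote the m-fold Kronecker product of B with itself. Then the matrix B^{⊗m} + I_{(2K)^m} over F₂ has full rank (2K)^m, i.e., it is invertible. -/
open Classical

/-!
If `A² = 1`, then `B = [[1, A], [A, 1]]` satisfies `B² = 2B` over every commutative ring, so its
Kronecker power `N = B^{⊗m}` satisfies `N² = 2^m N`. An element `x` with `x² = cx` has `x + 1`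
invertible as soon as `c + 1` is, the inverse being `1 - (c + 1)⁻¹ x`. Over `F₂` and for `m ≥ 1`,
`c + 1 = 2^m + 1 = 1`.
-/

theorem isUnit_add_one_of_mul_self_eq_smul {R S : Type*} [CommSemiring R] [Ring S] [Algebra R S]
    {x : S} {c : R} (hx : x * x = c • x) (hc : IsUnit (c + 1)) : IsUnit (x + 1) := by
  obtain ⟨u, hu⟩ := hc.exists_left_inv
  have smul_collapse : u • c • x + u • x = x := by
    rw [smul_smul, ← add_smul, ← mul_add_one, hu, one_smul]
  refine isUnit_iff_exists.mpr ⟨1 - u • x, ?_, ?_⟩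
  · calc (x + 1) * (1 - u • x) = x + 1 - (u • c • x + u • x) := by
          rw [mul_sub, mul_one, add_mul, one_mul, mul_smul_comm, hx]
      _ = 1 := by rw [smul_collapse, add_sub_cancel_left]
  · calc (1 - u • x) * (x + 1) = x + 1 - (u • c • x + u • x) := by
          rw [sub_mul, one_mul, mul_add, mul_one, smul_mul_assoc, hx]
      _ = 1 := by rw [smul_collapse, add_sub_cancel_left]

theorem fromBlocks_one_mul_self_eq_two_smul {n R : Type*} [Fintype n] [DecidableEq n]
    [Semiring R] {A : Matrix n n R} (hA : A * A = 1) :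
    Matrix.fromBlocks 1 A A 1 * Matrix.fromBlocks 1 A A 1 =
      (2 : R) • Matrix.fromBlocks 1 A A 1 := by
  rw [Matrix.fromBlocks_multiply, Matrix.fromBlocks_smul]
  simp only [hA, Matrix.one_mul, Matrix.mul_one, two_smul]

theorem kronPow_mul {ι R : Type} [Fintype ι] [CommSemiring R] (m : ℕ) (B C : Matrix ι ι R) :
    kronPow m (B * C) = kronPow m B * kronPow m C := by
  ext x y
  simp only [kronPow, Matrix.of_apply, Matrix.mul_apply, Fintype.prod_sum, Finset.prod_mul_distrib]

theorem kronPow_smul {ι R : Type} [CommMonoid R] (m : ℕ) (c : R) (B : Matrix ι ι R) :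
    kronPow m (c • B) = c ^ m • kronPow m B := by
  ext x y
  simp [kronPow, Finset.prod_mul_distrib]

theorem kronPow_mul_self_eq_smul {ι R : Type} [Fintype ι] [CommSemiring R] {B : Matrix ι ι R}
    {c : R} (hB : B * B = c • B) (m : ℕ) :
    kronPow m B * kronPow m B = c ^ m • kronPow m B := by
  rw [← kronPow_mul, hB, kronPow_smul]

theorem kronecker_power_plus_identity_full_rank_general {n R : Type} [Fintype n] [DecidableEq n]
    [CommRing R] [Nontrivial R] (m : ℕ) (h2m : IsUnit (2 ^ m + 1 : R))
    (A : Matrix n n R) (hA : A * A = 1) :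
    (kronPow m (Matrix.fromBlocks 1 A A 1) + 1).rank = (2 * Fintype.card n) ^ m ∧
    IsUnit (kronPow m (Matrix.fromBlocks 1 A A 1) + 1) := by
  have isUnit_add_one : IsUnit (kronPow m (Matrix.fromBlocks 1 A A 1) + 1) :=
    isUnit_add_one_of_mul_self_eq_smul
      (kronPow_mul_self_eq_smul (fromBlocks_one_mul_self_eq_two_smul hA) m) h2m
  refine ⟨?_, isUnit_add_one⟩
  rw [Matrix.rank_of_isUnit _ isUnit_add_one, Fintype.card_fun, Fintype.card_sum, Fintype.card_fin,
    ← two_mul]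

/-- If `A² = I` over `F₂` and `B = [[I,A],[A,I]]`, then
`B^{⊗m} + I` has full rank `(2K)^m`, i.e. it is invertible. -/
theorem kronecker_power_plus_identity_full_rank (K m : ℕ) (hK : 1 ≤ K) (hm : 1 ≤ m)
    (A : Matrix (Fin K) (Fin K) (ZMod 2)) (hA : A * A = 1) :
    (kronPow m (Matrix.fromBlocks 1 A A 1) + 1).rank = (2 * K) ^ m ∧
    IsUnit (kronPow m (Matrix.fromBlocks 1 A A 1) + 1) := by
  have h2m : IsUnit (2 ^ m + 1 : ZMod 2) := by
    simp [CharTwo.two_eq_zero, Nat.one_le_iff_ne_zero.mp hm]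
  simpa only [Fintype.card_fin] using kronecker_power_plus_identity_full_rank_general m h2m A hA
end

section
/- Let g : {0,1}^n → {0,1} be a non-constant monotone function, let 𝒳 ⊆ g^{-1}(1) and 𝒴 ⊆ g^{-1}(0) be sets of equal size K, each identified with [K] via fixed bijections, and let A ∈ F₂^{K×K} be a symmetric matrix with A² = I_K (viewed as a matrix with rows indexed by 𝒳 and columns by 𝒴). Let 𝒲 be the set of matrices in {0,1}^{m×n} all of whose rows lie in 𝒳 ∪ 𝒴, so |𝒲| = (2K)^m, and let M ∈ F₂^{𝒲×𝒲} be defined by: M_{X,Y} = 0 if a = b, and otherwise M_{X,Y} = ∏_{i=1}^m c_i, where a_i = g(X_i), b_i = g(Y_i), and c_i = A_{X_i,Y_i} if a_i = 1 and b_i = 0; c_i = A_{Y_i,X_i} if a_i = 0 and b_i = 1; and c_i = 1 if a_i = b_i and X_i = Y_i, c_i = 0 if a_i = b_i and X_i ≠ Y_i. Then for every monochromatic rectangle R of the communication problem U_m ◇ mKW_{𝒳×𝒴}, it holds that rank_{F₂}(M|_R) ≤ (2K)^m / (2^m · μ_{F₂}(mKW_{𝒳×𝒴}, A)); equivalently,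 log₂ rank_{F₂}(M|_R) ≤ log₂|𝒲| − m − log₂ μ_{F₂}(mKW_{𝒳×𝒴}, A). -/
open Classical

/-! The rows of `M` live on `𝒳 ∪ 𝒴`. Encode `xs k` as the standard basis vector `e_k` and `ys k` as
the column `A e_k`. If the columns of `A` are orthonormal, then `c_i` is the dot product of the
codes of `X_i` and `Y_i`, so the matrix of each row factor `c_i` has rank at most `K`.

On a rectangle whose common output is an entry `(i, j)`, the rows `X_i` and `Y_i` always differ, so
the case distinction `a = b` is absorbed by the product: if `a = b` then already `c_i = 0`. Hence
`M|_R` is the Hadamard product of the `m` row factor matrices, and its rank is at most the product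
of their ranks. All rows but `i` contribute at most `K`. After exchanging the players if necessary,
`X_{i,j} = 1` and `Y_{i,j} = 0` throughout `R`, so `c_i` vanishes unless `a_i > b_i`, and the factor
of row `i` is, up to repeated and zero rows and columns, a submatrix of the restriction of `A` to
the `mKW`-rectangle with output `j`. -/

section Rank

variable {F m n : Type*} [Field F] [Fintype n]

theorem finrank_submodule_mul_le {S : Type*} [Ring S] [Algebra F S] (M N : Submodule F S)
    [FiniteDimensional F M] [FiniteDimensional F N] :
    Module.finrank F ↥(M * N) ≤ Module.finrank F M * Module.finrank F N := by
  rw [← Submodule.mulMap_range, ← Module.finrank_tensorProduct]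
  exact LinearMap.finrank_range_le _

theorem rank_hadamard_le [Finite m] (A B : Matrix m n F) :
    (A.hadamard B).rank ≤ A.rank * B.rank := by
  simp only [Matrix.rank_eq_finrank_span_cols]
  refine (Submodule.finrank_mono (Submodule.span_le.2 ?_)).trans (finrank_submodule_mul_le _ _)
  rintro _ ⟨j, rfl⟩
  exact Submodule.mul_mem_mul (Submodule.subset_span ⟨j, rfl⟩) (Submodule.subset_span ⟨j, rfl⟩)

theorem rank_of_prod_le [Finite m] {ι : Type*} (s : Finset ι) (B : ι → Matrix m n F) :
    (Matrix.of fun x y => ∏ i ∈ s, B i x y).rank ≤ ∏ i ∈ s, (B i).rank := by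
  classical
  induction s using Finset.induction_on with
  | empty =>
    simpa [Matrix.vecMulVec] using Matrix.rank_vecMulVec_le (1 : m → F) (1 : n → F)
  | insert i s hi ih =>
    simp only [Finset.prod_insert hi]
    exact (rank_hadamard_le (B i) _).trans (Nat.mul_le_mul_left _ ih)

theorem rank_le_rank_submatrix_of_col_eq_zero [Finite m] {B : Matrix m n F} {q : n → Prop}
    [Fintype {j // q j}] (h : ∀ j, ¬ q j → B.col j = 0) :
    B.rank ≤ (B.submatrix id (Subtype.val : {j // q j} → n)).rank := by
  simp only [Matrix.rank_eq_finrank_span_cols]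
  refine Submodule.finrank_mono (Submodule.span_le.2 ?_)
  rintro _ ⟨j, rfl⟩
  by_cases hj : q j
  · exact Submodule.subset_span ⟨⟨j, hj⟩, rfl⟩
  · simp [h j hj]

theorem rank_le_rank_submatrix_of_support [Finite m] {B : Matrix m n F} {p : m → Prop}
    {q : n → Prop} [Fintype {j // q j}]
    (h : ∀ i j, B i j ≠ 0 → p i ∧ q j) :
    B.rank ≤
      (B.submatrix (Subtype.val : {i // p i} → m) (Subtype.val : {j // q j} → n)).rank := by
  have hcol : ∀ j, ¬ q j → B.col j = 0 := fun j hj =>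
    funext fun i => by_contra fun hij => hj (h i j hij).2
  have hrow : ∀ i, ¬ p i → (B.submatrix id (Subtype.val : {j // q j} → n)).transpose.col i = 0 :=
    fun i hi => funext fun j => by_contra fun hij => hi (h i j hij).1
  have := Fintype.ofFinite m
  have := Fintype.ofFinite {i // p i}
  refine (rank_le_rank_submatrix_of_col_eq_zero hcol).trans ?_
  rw [← Matrix.rank_transpose, ← Matrix.rank_transpose (B.submatrix _ _)]
  exact rank_le_rank_submatrix_of_col_eq_zero hrow

end Rank

theorem rank_submatrix_le_monoMaxRank_s16 {X Y O : Type} [Fintype X] [Fintype Y]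
    {S : X → Y → O → Prop} (A : Matrix X Y (ZMod 2)) {p q : Type*} [Finite p] [Fintype q]
    {r : p → X} {c : q → Y} {o : O} (h : ∀ a b, S (r a) (c b) o) :
    (A.submatrix r c).rank ≤ monoMaxRank S A := by
  have := Fintype.ofFinite p
  let U : Finset X := Finset.univ.image r
  let V : Finset Y := Finset.univ.image c
  calc (A.submatrix r c).rank
      = ((A.submatrix (Subtype.val : {x // x ∈ U} → X) (Subtype.val : {y // y ∈ V} → Y)).submatrix
          (fun a => ⟨r a, by simp [U]⟩) (fun b => ⟨c b, by simp [V]⟩)).rank := rfl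
    _ ≤ (A.submatrix (Subtype.val : {x // x ∈ U} → X) (Subtype.val : {y // y ∈ V} → Y)).rank :=
        Matrix.rank_submatrix_le _ _ _
    _ ≤ monoMaxRank S A := by
        refine le_csSup ⟨A.rank, ?_⟩ ⟨U, V, o, by simpa [U, V] using h, rfl⟩
        rintro _ ⟨U, V, _, -, rfl⟩
        exact A.rank_submatrix_le _ _

section RowFactor

open scoped Matrix

variable {α κ R : Type*}

/-- The factor `c_i` contributed to `M` by a single pair of rows `x = X_i` and `y = Y_i`. -/
def rowFactor [DecidableEq α] [Zero R] [One R] (g : α → Bool) (ix iy : α → κ) (A : Matrix κ κ R) :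
    Matrix α α R :=
  Matrix.of fun x y =>
    if g x = true ∧ g y = false then A (ix x) (iy y)
    else if g x = false ∧ g y = true then A (ix y) (iy x)
    else if x = y then 1 else 0

/-- The code of a row: the basis vector `e_k` for `xs k` and the column `A e_k` for `ys k`. The row
factors are the dot products of these codes. -/
def rowCode [DecidableEq κ] [Zero R] [One R] (g : α → Bool) (ix iy : α → κ) (A : Matrix κ κ R)
    (x : α) : κ → R :=
  if g x = true then Pi.single (ix x) 1 else A.col (iy x)

theorem rowFactor_comm [DecidableEq α] [Zero R] [One R] (g : α → Bool) (ix iy : α → κ)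
    (A : Matrix κ κ R) (x y : α) : rowFactor g ix iy A x y = rowFactor g ix iy A y x := by
  by_cases h : x = y
  · rw [h]
  · cases hx : g x <;> cases hy : g y <;> simp [rowFactor, hx, hy, h, Ne.symm h]

variable {g : α → Bool} {xs ys : κ → α} {ix iy : α → κ}

theorem apply_leftInverse_of_mem_union {b : Bool} (hix : ∀ k, ix (xs k) = k)
    (hys : ∀ k, g (ys k) ≠ b) {x : α} (hx : x ∈ Set.range xs ∪ Set.range ys) (hgx : g x = b) :
    xs (ix x) = x := by
  rcases hx with ⟨k, rfl⟩ | ⟨k, rfl⟩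
  · rw [hix]
  · exact absurd hgx (hys k)

theorem rowFactor_eq_dotProduct [DecidableEq α] [Fintype κ] [DecidableEq κ] [CommSemiring R]
    {A : Matrix κ κ R}
    (hix : ∀ k, ix (xs k) = k) (hiy : ∀ k, iy (ys k) = k)
    (hgx : ∀ k, g (xs k) = true) (hgy : ∀ k, g (ys k) = false) (hA : A.transpose * A = 1)
    {x y : α} (hx : x ∈ Set.range xs ∪ Set.range ys) (hy : y ∈ Set.range xs ∪ Set.range ys) :
    rowFactor g ix iy A x y = rowCode g ix iy A x ⬝ᵥ rowCode g ix iy A y := by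
  have hxs : Function.Injective xs := Function.LeftInverse.injective hix
  have hys : Function.Injective ys := Function.LeftInverse.injective hiy
  have horth (k l : κ) : A.col k ⬝ᵥ A.col l = (1 : Matrix κ κ R) k l := hA ▸ rfl
  rcases hx with ⟨k, rfl⟩ | ⟨k, rfl⟩ <;> rcases hy with ⟨l, rfl⟩ | ⟨l, rfl⟩ <;>
    simp [rowFactor, rowCode, hgx, hgy, hix, hiy, hxs.eq_iff, hys.eq_iff, horth, Matrix.one_apply,
      Pi.single_apply, eq_comm (a := l)]

theorem rank_rowFactor_submatrix_le [DecidableEq α] [Fintype κ] [DecidableEq κ]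
    [CommSemiring R] [StrongRankCondition R] {p q : Type*} [Fintype q] {A : Matrix κ κ R}
    (hix : ∀ k, ix (xs k) = k) (hiy : ∀ k, iy (ys k) = k)
    (hgx : ∀ k, g (xs k) = true) (hgy : ∀ k, g (ys k) = false) (hA : A.transpose * A = 1)
    {r : p → α} {c : q → α} (hr : ∀ a, r a ∈ Set.range xs ∪ Set.range ys)
    (hc : ∀ b, c b ∈ Set.range xs ∪ Set.range ys) :
    ((rowFactor g ix iy A).submatrix r c).rank ≤ Fintype.card κ := by
  have hGram : (rowFactor g ix iy A).submatrix r c =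
      (Matrix.of fun a => rowCode g ix iy A (r a)) *
        (Matrix.of fun b => rowCode g ix iy A (c b)).transpose := by
    ext a b
    exact rowFactor_eq_dotProduct hix hiy hgx hgy hA (hr a) (hc b)
  rw [hGram]
  exact (Matrix.rank_mul_le_left _ _).trans (Matrix.rank_le_card_width _)

theorem rank_rowFactor_submatrix_le_monoMaxRank {κ O : Type} [DecidableEq α] [Fintype κ]
    {p q : Type*} [Finite p] [Fintype q] {ix iy : α → κ} (A : Matrix κ κ (ZMod 2))
    {S : κ → κ → O → Prop} {o : O} {r : p → α} {c : q → α} (hne : ∀ a b, r a ≠ c b)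
    (hrc : ∀ a b, ¬ (g (r a) = false ∧ g (c b) = true))
    (hS : ∀ a b, g (r a) = true → g (c b) = false → S (ix (r a)) (iy (c b)) o) :
    ((rowFactor g ix iy A).submatrix r c).rank ≤ monoMaxRank S A := by
  have hsupp (a b) (hab : (rowFactor g ix iy A).submatrix r c a b ≠ 0) :
      g (r a) = true ∧ g (c b) = false := by
    by_contra h
    simp [rowFactor, h, hrc a b, hne] at hab
  calc ((rowFactor g ix iy A).submatrix r c).rank
      ≤ (((rowFactor g ix iy A).submatrix r c).submatrix
          (Subtype.val : {a // g (r a) = true} → p)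
          (Subtype.val : {b // g (c b) = false} → q)).rank :=
        rank_le_rank_submatrix_of_support hsupp
    _ = (A.submatrix (fun a : {a // g (r a) = true} => ix (r a))
          (fun b : {b // g (c b) = false} => iy (c b))).rank := by
        congr 1
        ext a b
        simp [rowFactor, a.2, b.2]
    _ ≤ monoMaxRank S A := rank_submatrix_le_monoMaxRank_s16 A fun a b => hS a b a.2 b.2

end RowFactor

section SemiMonotone

/-- The problem `mKW_{𝒳×𝒴}` for `𝒳 = {xs k}` and `𝒴 = {ys k}`, with the inputs given by their
indices. -/
def mKWIndexed {κ ι : Type*} (xs ys : κ → ι → Bool) : κ → κ → ι → Prop :=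
  fun k k' j => xs k j = true ∧ ys k' j = false

theorem semiU_comm {m : ℕ} {ι : Type} {g : (ι → Bool) → Bool} {X Y : Fin m → ι → Bool}
    {o : Option (Fin m × ι)} : semiU g X Y o ↔ semiU g Y X o := by
  cases o with
  | none => exact forall_congr' fun _ => eq_comm
  | some e =>
    simp only [semiU, eq_comm (a := g (Y e.1)) (b := g (X e.1)), ne_comm (a := Y e.1 e.2)]
    tauto

theorem ne_of_semiU_some {m : ℕ} {ι : Type} {g : (ι → Bool) → Bool} {X Y : Fin m → ι → Bool}
    {i : Fin m} {j : ι} (h : semiU g X Y (some (i, j))) : X i j ≠ Y i j := by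
  rcases h with ⟨-, -, hX, hY⟩ | ⟨-, -, hX, hY⟩ | ⟨-, h⟩
  · simp [hX, hY]
  · simp [hX, hY]
  · exact h

theorem not_lt_of_semiU_some {m : ℕ} {ι : Type} {g : (ι → Bool) → Bool} {X Y : Fin m → ι → Bool}
    {i : Fin m} {j : ι} (h : semiU g X Y (some (i, j))) (hX : X i j = true) :
    ¬ (g (X i) = false ∧ g (Y i) = true) := by
  rintro ⟨hx, hy⟩
  simp [semiU, hx, hy, hX] at h

variable {m n K : ℕ} {g : (Fin n → Bool) → Bool} {xs ys : Fin K → (Fin n → Bool)}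
  {ix iy : (Fin n → Bool) → Fin K} {A : Matrix (Fin K) (Fin K) (ZMod 2)}

theorem semiM_apply_comm (X Y : Fin m → Fin n → Bool) :
    semiM g xs ys ix iy A X Y = semiM g xs ys ix iy A Y X := by
  change (if _ then 0 else ∏ i, rowFactor g ix iy A (X i) (Y i)) =
    if _ then 0 else ∏ i, rowFactor g ix iy A (Y i) (X i)
  simp only [rowFactor_comm g ix iy A (Y _), eq_comm]

theorem semiM_apply_of_row_ne {X Y : Fin m → Fin n → Bool} {i : Fin m} (h : X i ≠ Y i) :
    semiM g xs ys ix iy A X Y = ∏ s, rowFactor g ix iy A (X s) (Y s) := by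
  change (if _ then 0 else ∏ s, rowFactor g ix iy A (X s) (Y s)) = _
  split_ifs with hab
  · have hi : g (X i) = g (Y i) := congrFun hab i
    exact (Finset.prod_eq_zero (Finset.mem_univ i) (by simp [rowFactor, h, hi])).symm
  · rfl

theorem rank_semiM_submatrix_le_of_oriented {p q : Type*} [Finite p] [Fintype q]
    (hix : ∀ k, ix (xs k) = k) (hiy : ∀ k, iy (ys k) = k)
    (hgx : ∀ k, g (xs k) = true) (hgy : ∀ k, g (ys k) = false) (hA : A.transpose * A = 1)
    {r : p → Fin m → Fin n → Bool} {c : q → Fin m → Fin n → Bool}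
    (hr : ∀ a i, r a i ∈ Set.range xs ∪ Set.range ys)
    (hc : ∀ b i, c b i ∈ Set.range xs ∪ Set.range ys) {i : Fin m} {j : Fin n}
    (hrj : ∀ a, r a i j = true) (hcj : ∀ b, c b i j = false)
    (hmono : ∀ a b, semiU g (r a) (c b) (some (i, j))) :
    ((semiM g xs ys ix iy A).submatrix r c).rank ≤
      monoMaxRank (mKWIndexed xs ys) A * K ^ (m - 1) := by
  let B (s : Fin m) : Matrix p q (ZMod 2) :=
    (rowFactor g ix iy A).submatrix (fun a => r a s) (fun b => c b s)
  have hB : (semiM g xs ys ix iy A).submatrix r c = Matrix.of fun a b => ∏ s, B s a b := by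
    ext a b
    exact semiM_apply_of_row_ne (xs := xs) (ys := ys) fun h =>
      ne_of_semiU_some (hmono a b) (congrFun h j)
  have hBi : (B i).rank ≤ monoMaxRank (mKWIndexed xs ys) A := by
    refine rank_rowFactor_submatrix_le_monoMaxRank (o := j) A
      (fun a b h => ne_of_semiU_some (hmono a b) (congrFun h j))
      (fun a b => not_lt_of_semiU_some (hmono a b) (hrj a)) fun a b ha hb => ⟨?_, ?_⟩
    · rw [apply_leftInverse_of_mem_union hix (by simp [hgy]) (hr a i) ha, hrj]
    · rw [apply_leftInverse_of_mem_union hiy (by simp [hgx]) (hc b i).symm hb, hcj]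
  have hBs (s) : (B s).rank ≤ K := by
    simpa using rank_rowFactor_submatrix_le hix hiy hgx hgy hA (hr · s) (hc · s)
  calc ((semiM g xs ys ix iy A).submatrix r c).rank
      ≤ ∏ s, (B s).rank := hB ▸ rank_of_prod_le _ B
    _ = (B i).rank * ∏ s ∈ Finset.univ.erase i, (B s).rank :=
        (Finset.mul_prod_erase _ _ (Finset.mem_univ i)).symm
    _ ≤ _ := Nat.mul_le_mul hBi
        ((Finset.prod_le_pow_card _ _ _ fun s _ => hBs s).trans_eq (by simp))

theorem rank_semiM_submatrix_le {p q : Type*} [Finite p] [Fintype q]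
    (hix : ∀ k, ix (xs k) = k) (hiy : ∀ k, iy (ys k) = k)
    (hgx : ∀ k, g (xs k) = true) (hgy : ∀ k, g (ys k) = false) (hA : A.transpose * A = 1)
    {r : p → Fin m → Fin n → Bool} {c : q → Fin m → Fin n → Bool}
    (hr : ∀ a i, r a i ∈ Set.range xs ∪ Set.range ys)
    (hc : ∀ b i, c b i ∈ Set.range xs ∪ Set.range ys) {i : Fin m} {j : Fin n}
    (hmono : ∀ a b, semiU g (r a) (c b) (some (i, j))) :
    ((semiM g xs ys ix iy A).submatrix r c).rank ≤
      monoMaxRank (mKWIndexed xs ys) A * K ^ (m - 1) := by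
  have := Fintype.ofFinite p
  rcases isEmpty_or_nonempty p with _ | ⟨⟨a₀⟩⟩
  · exact (Matrix.rank_le_card_height _).trans (by simp)
  rcases isEmpty_or_nonempty q with _ | ⟨⟨b₀⟩⟩
  · exact (Matrix.rank_le_card_width _).trans (by simp)
  have hne (a b) : r a i j ≠ c b i j := ne_of_semiU_some (hmono a b)
  have hc₀ (b) : c b i j = !r a₀ i j := Bool.eq_not.2 (hne a₀ b).symm
  have hr₀ (a) : r a i j = r a₀ i j := by
    rw [Bool.eq_not.2 (hne a b₀), hc₀, Bool.not_not]
  cases h₀ : r a₀ i j with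
  | true =>
    exact rank_semiM_submatrix_le_of_oriented hix hiy hgx hgy hA hr hc
      (fun a => (hr₀ a).trans h₀) (fun b => by simp [hc₀, h₀]) hmono
  | false =>
    have hsymm : (semiM g xs ys ix iy A).submatrix r c =
        ((semiM g xs ys ix iy A).submatrix c r).transpose := by
      ext a b
      exact semiM_apply_comm (xs := xs) (ys := ys) _ _
    rw [hsymm, Matrix.rank_transpose]
    exact rank_semiM_submatrix_le_of_oriented hix hiy hgx hgy hA hc hr
      (fun b => by simp [hc₀, h₀]) (fun a => (hr₀ a).trans h₀) fun b a => semiU_comm.1 (hmono a b)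

theorem rank_eq_of_transpose_mul_self_eq_one {κ R : Type*} [Fintype κ] [DecidableEq κ] [CommRing R]
    [StrongRankCondition R] {A : Matrix κ κ R} (hA : A.transpose * A = 1) :
    A.rank = Fintype.card κ :=
  A.rank_of_isUnit (IsUnit.of_mul_eq_one_right _ hA)

theorem monoMaxRank_mul_pow_eq_div_muF2 {X Y O : Type} [Fintype X] [Fintype Y]
    {S : X → Y → O → Prop} {A : Matrix X Y (ZMod 2)} {k m : ℕ} (hA : A.rank = k) (hk : k ≠ 0)
    (hm : m ≠ 0) : (monoMaxRank S A * k ^ (m - 1) : ℝ) = (2 * k) ^ m / (2 ^ m * muF2 S A) := by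
  obtain ⟨m, rfl⟩ := Nat.exists_eq_add_one_of_ne_zero hm
  rw [muF2, hA, Nat.add_sub_cancel, mul_pow, mul_div_mul_left _ _ (by positivity), pow_succ]
  field_simp

theorem semiM_monochromatic_rank_bound_general
    (hix : ∀ k, ix (xs k) = k) (hiy : ∀ k, iy (ys k) = k)
    (hgx : ∀ k, g (xs k) = true) (hgy : ∀ k, g (ys k) = false) (hA : A.transpose * A = 1)
    {U V : Finset (Fin m → Fin n → Bool)}
    (hU : ∀ X ∈ U, ∀ i, X i ∈ Set.range xs ∪ Set.range ys)
    (hV : ∀ Y ∈ V, ∀ i, Y i ∈ Set.range xs ∪ Set.range ys)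
    {o : Option (Fin m × Fin n)} (hmono : ∀ X ∈ U, ∀ Y ∈ V, semiU g X Y o) :
    (((semiM (m := m) g xs ys ix iy A).submatrix
        (Subtype.val : {X // X ∈ U} → (Fin m → Fin n → Bool))
        (Subtype.val : {Y // Y ∈ V} → (Fin m → Fin n → Bool))).rank : ℝ) ≤
      (2 * K : ℝ) ^ m / (2 ^ m * muF2 (mKWIndexed xs ys) A) := by
  rcases o with _ | ⟨i, j⟩
  · have hzero : (semiM (m := m) g xs ys ix iy A).submatrix
        (Subtype.val : {X // X ∈ U} → _) (Subtype.val : {Y // Y ∈ V} → _) = 0 := by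
      ext X Y
      exact if_pos (funext (hmono X X.2 Y Y.2))
    rw [hzero, Matrix.rank_zero, Nat.cast_zero, muF2]
    positivity
  · have hK : K ≠ 0 := (ix default).pos.ne'
    have hrank : A.rank = K := by simpa using rank_eq_of_transpose_mul_self_eq_one hA
    rw [← monoMaxRank_mul_pow_eq_div_muF2 hrank hK i.pos.ne']
    exact_mod_cast rank_semiM_submatrix_le hix hiy hgx hgy hA (fun X : U => hU X X.2)
      (fun Y : V => hV Y Y.2) fun X Y => hmono X X.2 Y Y.2

end SemiMonotone

/-- For every monochromatic rectangle `R = U × V` of the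
communication problem `U_m ◇ mKW_{𝒳×𝒴}` (restricted to matrices whose rows lie in
`𝒳 ∪ 𝒴`), the restriction of `M` to `R` has
`rank_{F₂}(M|_R) ≤ (2K)^m / (2^m · μ_{F₂}(mKW_{𝒳×𝒴}, A))`. -/
theorem semiM_monochromatic_rank_bound (m n K : ℕ) (hm : 1 ≤ m) (hK : 1 ≤ K)
    (g : (Fin n → Bool) → Bool) (hg : Monotone g)
    (hg1 : ∃ x, g x = true) (hg0 : ∃ x, g x = false)
    (xs ys : Fin K → (Fin n → Bool))
    (ix iy : (Fin n → Bool) → Fin K)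
    (hix : ∀ k, ix (xs k) = k) (hiy : ∀ k, iy (ys k) = k)
    (hgx : ∀ k, g (xs k) = true) (hgy : ∀ k, g (ys k) = false)
    (A : Matrix (Fin K) (Fin K) (ZMod 2)) (hsymm : A.IsSymm) (hAA : A * A = 1)
    (U V : Finset (Fin m → Fin n → Bool))
    (hU : ∀ X ∈ U, ∀ i, X i ∈ Set.range xs ∪ Set.range ys)
    (hV : ∀ Y ∈ V, ∀ i, Y i ∈ Set.range xs ∪ Set.range ys)
    (o : Option (Fin m × Fin n))
    (hmono : ∀ X ∈ U, ∀ Y ∈ V, semiU g X Y o) :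
    (((semiM (m := m) g xs ys ix iy A).submatrix
        (Subtype.val : {X // X ∈ U} → (Fin m → Fin n → Bool))
        (Subtype.val : {Y // Y ∈ V} → (Fin m → Fin n → Bool))).rank : ℝ) ≤
      ((2 * K : ℝ)) ^ m /
        ((2 : ℝ) ^ m *
          muF2 (fun k k' (j : Fin n) => xs k j = true ∧ ys k' j = false) A) :=
  semiM_monochromatic_rank_bound_general hix hiy hgx hgy (by rw [hsymm.eq, hAA]) hU hV hmono
end

section
/- Let Λ be a finite set of even, positive cardinality, let ℓ ≥ 1, and let p : F₂^ℓ → F₂ be a multilinear polynomial, p(z) = Σ_{T⊆[ℓ]} p̂(T)·∏_{i∈T} z_i with coefficients p̂(T) ∈ F₂, whose top coefficient satisfies p̂([ℓ]) = 1. Define the pattern matrix A ∈ F₂^{Λ^ℓ × Λ^ℓ} by A_{x,y} = p(eq(x_1,y_1),…,eq(x_ℓ,y_ℓ)), where eq(u,v) = 1 if u = v and 0 otherwise. Then A is symmetric and A² = I, the identity matrix of order |Λ|^ℓ. -/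
open Classical

/-!
The pattern matrix is the linear combination `∑ T, p̂ T • M_T` of the agreement matrices `M_T`,
where `M_T x y` tells whether `x` and `y` agree on `T`. Counting midpoints coordinate by coordinate
gives `M_T * M_S = |Λ| ^ |(T ∪ S)ᶜ| • M_(T ∩ S)`. Hence the `M_T` commute, so in characteristic two
squaring is additive on their span; since `|Λ|` is even, all squares vanish except that of
`M_univ = 1`.
-/

theorem sum_mul_self_of_commute {α A : Type*} [Semiring A] (htwo : (2 : A) = 0)
    (s : Finset α) (f : α → A) (hf : (s : Set α).Pairwise fun a b => Commute (f a) (f b)) :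
    (∑ a ∈ s, f a) * ∑ a ∈ s, f a = ∑ a ∈ s, f a * f a := by
  induction s using Finset.cons_induction with
  | empty => simp
  | cons a s ha ih =>
    have hcomm : Commute (f a) (∑ b ∈ s, f b) :=
      Commute.sum_right s f (f a) fun b hb =>
        hf (by simp) (by simp [hb]) (ne_of_mem_of_not_mem hb ha).symm
    have hs := ih (hf.mono (by simp))
    rw [Finset.sum_cons, Finset.sum_cons, ← hs, ← pow_two, hcomm.add_sq, htwo, zero_mul, zero_mul,
      add_zero, pow_two, pow_two]

section AgreementMatrix

variable {ι Λ : Type*} (R : Type*) [CommSemiring R] [DecidableEq Λ]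

/-- The matrix `M_T` whose entry at `(x, y)` indicates whether the tuples `x` and `y` agree on `T`;
it is the pattern matrix of the monomial `∏ i ∈ T, z i`. -/
def agreementMatrix (T : Finset ι) : Matrix (ι → Λ) (ι → Λ) R :=
  Matrix.of fun x y => if ∀ i ∈ T, x i = y i then 1 else 0

theorem agreementMatrix_isSymm (T : Finset ι) :
    (agreementMatrix R T : Matrix (ι → Λ) (ι → Λ) R).IsSymm := by
  ext x y
  simp only [agreementMatrix, Matrix.transpose_apply, Matrix.of_apply, eq_comm]

theorem agreementMatrix_univ [Fintype ι] [DecidableEq (ι → Λ)] :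
    (agreementMatrix R Finset.univ : Matrix (ι → Λ) (ι → Λ) R) = 1 := by
  ext x y
  simp [agreementMatrix, Matrix.one_apply, funext_iff]

theorem sum_boole_imp_eq_mul_boole_imp_eq [Fintype Λ] (a b : Λ) (p q : Prop) [Decidable p]
    [Decidable q] :
    ∑ c, (if p → a = c then (1 : R) else 0) * (if q → c = b then (1 : R) else 0) =
      (if p ∨ q then 1 else (Fintype.card Λ : R)) * if p ∧ q → a = b then 1 else 0 := by
  by_cases hp : p <;> by_cases hq : q <;> simp [hp, hq]

variable [Fintype ι] [DecidableEq ι] [Fintype Λ]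

theorem agreementMatrix_mul_agreementMatrix (T S : Finset ι) :
    (agreementMatrix R T * agreementMatrix R S : Matrix (ι → Λ) (ι → Λ) R) =
      (Fintype.card Λ : R) ^ (T ∪ S)ᶜ.card • agreementMatrix R (T ∩ S) := by
  ext x y
  have agreementMatrix_eq_prod (U : Finset ι) (u v : ι → Λ) :
      agreementMatrix R U u v = ∏ i, if i ∈ U → u i = v i then 1 else 0 := by
    simp [agreementMatrix, Finset.prod_boole]
  have card_pow_eq_prod : (Fintype.card Λ : R) ^ (T ∪ S)ᶜ.card =
      ∏ i, if i ∈ T ∨ i ∈ S then 1 else (Fintype.card Λ : R) := by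
    simp only [← Finset.mem_union, Finset.prod_ite, Finset.prod_const, one_pow, one_mul,
      Finset.filter_notMem_eq_sdiff, Finset.compl_eq_univ_sdiff]
  calc (agreementMatrix R T * agreementMatrix R S : Matrix (ι → Λ) (ι → Λ) R) x y
      = ∑ z : ι → Λ, ∏ i, (if i ∈ T → x i = z i then (1 : R) else 0) *
          (if i ∈ S → z i = y i then (1 : R) else 0) := by
        simp only [Matrix.mul_apply, agreementMatrix_eq_prod, Finset.prod_mul_distrib]
    _ = ∏ i, ∑ c, (if i ∈ T → x i = c then (1 : R) else 0) *
          (if i ∈ S → c = y i then (1 : R) else 0) :=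
        (Fintype.prod_sum fun i c => (if i ∈ T → x i = c then (1 : R) else 0) *
          (if i ∈ S → c = y i then (1 : R) else 0)).symm
    _ = ((Fintype.card Λ : R) ^ (T ∪ S)ᶜ.card • agreementMatrix R (T ∩ S)) x y := by
        simp only [sum_boole_imp_eq_mul_boole_imp_eq, Finset.prod_mul_distrib, card_pow_eq_prod,
          agreementMatrix_eq_prod, Finset.mem_inter, Matrix.smul_apply, smul_eq_mul]

theorem agreementMatrix_commute (T S : Finset ι) :
    Commute (agreementMatrix R T : Matrix (ι → Λ) (ι → Λ) R) (agreementMatrix R S) := by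
  simp only [commute_iff_eq, agreementMatrix_mul_agreementMatrix, Finset.union_comm,
    Finset.inter_comm]

variable {R}

theorem agreementMatrix_mul_self_eq_zero (hcard : (Fintype.card Λ : R) = 0) {T : Finset ι}
    (hT : T ≠ Finset.univ) :
    (agreementMatrix R T * agreementMatrix R T : Matrix (ι → Λ) (ι → Λ) R) = 0 := by
  have hcompl : Tᶜ.card ≠ 0 := by simpa using hT
  rw [agreementMatrix_mul_agreementMatrix, Finset.union_self, hcard, zero_pow hcompl, zero_smul]

end AgreementMatrix

section GeneralizedPatternMatrix

variable {ι Λ R : Type*} [Fintype ι] [DecidableEq Λ] [CommSemiring R]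

/-- The matrix `p(eq(x i, y i) : i ∈ ι)` of the multilinear polynomial `p` with coefficients `c`,
over any commutative semiring and any finite set `ι` of variables; `patternMatrix` is the case
`ι = Fin ℓ`, `R = ZMod 2`. -/
def generalizedPatternMatrix (c : Finset ι → R) : Matrix (ι → Λ) (ι → Λ) R :=
  Matrix.of fun x y => ∑ T, c T * ∏ i ∈ T, if x i = y i then 1 else 0

theorem generalizedPatternMatrix_eq_sum (c : Finset ι → R) :
    (generalizedPatternMatrix c : Matrix (ι → Λ) (ι → Λ) R) =
      ∑ T, c T • agreementMatrix R T := by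
  ext x y
  simp [generalizedPatternMatrix, agreementMatrix, Matrix.sum_apply, Finset.prod_boole]

theorem generalizedPatternMatrix_isSymm (c : Finset ι → R) :
    (generalizedPatternMatrix c : Matrix (ι → Λ) (ι → Λ) R).IsSymm := by
  simp only [Matrix.IsSymm, generalizedPatternMatrix_eq_sum, Matrix.transpose_sum,
    Matrix.transpose_smul, (agreementMatrix_isSymm R _).eq]

theorem generalizedPatternMatrix_mul_self [Fintype Λ] [DecidableEq ι] [CharP R 2]
    (heven : Even (Fintype.card Λ)) (c : Finset ι → R) :
    (generalizedPatternMatrix c * generalizedPatternMatrix c : Matrix (ι → Λ) (ι → Λ) R) =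
      c Finset.univ ^ 2 • 1 := by
  have hcard : (Fintype.card Λ : R) = 0 := (CharP.cast_eq_zero_iff R 2 _).2 heven.two_dvd
  have htwo : (2 : Matrix (ι → Λ) (ι → Λ) R) = 0 := by
    rw [← map_ofNat (algebraMap R _) 2, CharTwo.two_eq_zero, map_zero]
  calc (generalizedPatternMatrix c * generalizedPatternMatrix c : Matrix (ι → Λ) (ι → Λ) R)
      = ∑ T, (c T • agreementMatrix R T) * (c T • agreementMatrix R T) := by
        rw [generalizedPatternMatrix_eq_sum]
        exact sum_mul_self_of_commute htwo _ _ fun T _ S _ _ =>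
          ((agreementMatrix_commute R T S).smul_left _).smul_right _
    _ = ∑ T, c T ^ 2 • (agreementMatrix R T * agreementMatrix R T) := by
        simp only [smul_mul_smul_comm, pow_two]
    _ = c Finset.univ ^ 2 • (agreementMatrix R Finset.univ * agreementMatrix R Finset.univ) :=
        Fintype.sum_eq_single _ fun T hT => by
          rw [agreementMatrix_mul_self_eq_zero hcard hT, smul_zero]
    _ = c Finset.univ ^ 2 • 1 := by rw [agreementMatrix_univ, mul_one]

theorem pattern_matrix_symmetric_involution_general [Fintype Λ] [DecidableEq ι] [CharP R 2]
    (heven : Even (Fintype.card Λ)) (c : Finset ι → R) :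
    (generalizedPatternMatrix c : Matrix (ι → Λ) (ι → Λ) R).IsSymm ∧
      (generalizedPatternMatrix c * generalizedPatternMatrix c : Matrix (ι → Λ) (ι → Λ) R) =
        c Finset.univ ^ 2 • 1 :=
  ⟨generalizedPatternMatrix_isSymm c, generalizedPatternMatrix_mul_self heven c⟩

end GeneralizedPatternMatrix

/-- Let `Λ` be a finite set of even positive cardinality and let
`p` be a multilinear polynomial over `F₂` in `ℓ` variables with top coefficient
`p̂([ℓ]) = 1`.  Then the pattern matrix `A_{x,y} = p(eq(x₁,y₁),…,eq(x_ℓ,y_ℓ))` is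
symmetric and satisfies `A² = I`. -/
theorem pattern_matrix_symmetric_involution {Λ : Type} [Fintype Λ] [DecidableEq Λ]
    (heven : Even (Fintype.card Λ)) (hpos : 0 < Fintype.card Λ)
    (ℓ : ℕ) (hℓ : 1 ≤ ℓ)
    (phat : Finset (Fin ℓ) → ZMod 2) (htop : phat Finset.univ = 1) :
    (patternMatrix (Λ := Λ) ℓ phat).IsSymm ∧
    patternMatrix (Λ := Λ) ℓ phat * patternMatrix (Λ := Λ) ℓ phat = 1 := by
  have h := pattern_matrix_symmetric_involution_general heven phat
  rwa [htop, one_pow, one_smul] at h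
end
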